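/- arXiv:2202.04932 — 4 statements merged into one kernel-verified Lean document; each statement's English description precedes it below -/
import Mathlib

section
/- Let Q, Q' be quadratic polynomials over C and r a natural number. Then there exists a linear space of linear forms V with dim(V) ≤ 8r such that every linear combination αQ + βQ' with rank_s(αQ + βQ') ≤ r satisfies MS(αQ + βQ') ⊆ V. -/
open MvPolynomial

noncomputable section

/-- A linear form: a homogeneous polynomial of degree 1. -/
def IsLinForm {σ : Type*} (p : MvPolynomial σ ℂ) : Prop := p.IsHomogeneous 1

/-- `Q` admits a representation as a sum of `r` products of pairs of linear forms. -/
def HasRep {σ : Type*} (Q : MvPolynomial σ ℂ) (r : ℕ) : Prop :=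
  ∃ a b : Fin r → MvPolynomial σ ℂ,
    (∀ i, IsLinForm (a i)) ∧ (∀ i, IsLinForm (b i)) ∧ Q = ∑ i, a i * b i

/-- `rank_s Q`: the minimal `r` such that `Q = ∑_{i=1}^r a_{2i-1} a_{2i}` for linear forms. -/
noncomputable def rankS {σ : Type*} (Q : MvPolynomial σ ℂ) : ℕ := sInf {r | HasRep Q r}

/-- The minimal space `MS Q`: the span of the linear forms appearing in a minimal
representation of `Q` (taken as the supremum over all minimal representations,
which coincides with any single one by well-definedness). -/
noncomputable def MS {σ : Type*} (Q : MvPolynomial σ ℂ) : Submodule ℂ (MvPolynomial σ ℂ) :=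
  ⨆ p : {ab : (Fin (rankS Q) → MvPolynomial σ ℂ) × (Fin (rankS Q) → MvPolynomial σ ℂ) //
      (∀ i, IsLinForm (ab.1 i)) ∧ (∀ i, IsLinForm (ab.2 i)) ∧ Q = ∑ i, ab.1 i * ab.2 i},
    Submodule.span ℂ (Set.range p.1.1 ∪ Set.range p.1.2)

/-- `C[V]₂`: the space of homogeneous quadratics depending only on linear forms in `V`. -/
def quadOn {σ : Type*} (V : Submodule ℂ (MvPolynomial σ ℂ)) :
    Submodule ℂ (MvPolynomial σ ℂ) :=
  Submodule.span ℂ {q | ∃ v ∈ V, ∃ w ∈ V, q = v * w}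

/-!
Let `D Q` be the span of the partial derivatives of a quadratic `Q`. It is linear in `Q`, it lies in
the span of the linear forms of any representation of `Q`, and it contains the linear forms of any
minimal one. For the last point, suppose `Q = ∑ aᵢ bᵢ` and let `f` be a functional vanishing on
`D Q` with `f a₀ = 1`. The contraction `∑ (f aᵢ) bᵢ + (f bᵢ) aᵢ` is zero because its coefficient at
`Xⱼ` is `f (∂ⱼ Q)`, hence the substitution `x ↦ x - f x • a₀` on linear forms fixes `Q`; as it kills
`a₀`, the representation was not minimal. Given a space `L` of quadratics, the elements of rank at
most `r` span a subspace with a basis consisting of such elements, and the linear forms in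
representations of these basis elements span `V`.
-/

section LinearForms

variable {σ ι R : Type*}

/-- The span of the partial derivatives of `Q`. For a quadratic over `ℂ` this is the space of linear
forms on which `Q` essentially depends. -/
def pderivSpan [CommSemiring R] (Q : MvPolynomial σ R) : Submodule R (MvPolynomial σ R) :=
  Submodule.span R (Set.range fun j => pderiv j Q)

lemma pderivSpan_le_iff [CommSemiring R] {Q : MvPolynomial σ R}
    {V : Submodule R (MvPolynomial σ R)} : pderivSpan Q ≤ V ↔ ∀ j, pderiv j Q ∈ V :=
  Submodule.span_le.trans Set.range_subset_iff

lemma pderivSpan_le_of_mem_span [CommSemiring R] {s : Set (MvPolynomial σ R)}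
    {V : Submodule R (MvPolynomial σ R)} (hs : ∀ Q ∈ s, pderivSpan Q ≤ V)
    {P : MvPolynomial σ R} (hP : P ∈ Submodule.span R s) : pderivSpan P ≤ V := by
  refine pderivSpan_le_iff.2 fun j => ?_
  have hle : Submodule.span R s ≤ V.comap (pderiv j).toLinearMap :=
    Submodule.span_le.2 fun Q hQ => pderivSpan_le_iff.1 (hs Q hQ) j
  exact hle hP

lemma pderiv_eq_C_of_isHomogeneous_one [CommSemiring R] {p : MvPolynomial σ R}
    (hp : p.IsHomogeneous 1) (j : σ) : pderiv j p = C (coeff (Finsupp.single j 1) p) := by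
  have hconst : pderiv j p = C (coeff 0 (pderiv j p)) :=
    totalDegree_eq_zero_iff_eq_C.1 ((totalDegree_zero_iff_isHomogeneous σ).2 hp.pderiv)
  simpa [coeff_pderiv] using hconst

lemma eq_zero_of_isHomogeneous_one_of_coeff_single [CommSemiring R] {p : MvPolynomial σ R}
    (hp : p.IsHomogeneous 1) (hcoeff : ∀ j, coeff (Finsupp.single j 1) p = 0) : p = 0 := by
  ext d
  by_cases hd : d.degree = 1
  · obtain ⟨j, rfl⟩ := Finsupp.range_single_one.ge hd
    exact hcoeff j
  · exact hp.coeff_eq_zero hd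

lemma pderiv_mul_of_isHomogeneous_one [CommSemiring R] {a b : MvPolynomial σ R}
    (ha : a.IsHomogeneous 1) (hb : b.IsHomogeneous 1) (j : σ) :
    pderiv j (a * b) =
      coeff (Finsupp.single j 1) a • b + coeff (Finsupp.single j 1) b • a := by
  rw [pderiv_mul, pderiv_eq_C_of_isHomogeneous_one ha, pderiv_eq_C_of_isHomogeneous_one hb,
    C_mul', mul_comm a, C_mul']

variable [Fintype ι]

lemma sum_smul_add_smul_eq_zero [CommSemiring R] {a b : ι → MvPolynomial σ R}
    (ha : ∀ i, (a i).IsHomogeneous 1) (hb : ∀ i, (b i).IsHomogeneous 1)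
    {f : MvPolynomial σ R →ₗ[R] R}
    (hf : ∀ j, f (pderiv j (∑ i, a i * b i)) = 0) :
    ∑ i, (f (a i) • b i + f (b i) • a i) = 0 := by
  refine eq_zero_of_isHomogeneous_one_of_coeff_single ?_ fun j => ?_
  · exact (homogeneousSubmodule σ R 1).sum_mem fun i _ =>
      add_mem (Submodule.smul_mem _ _ (hb i)) (Submodule.smul_mem _ _ (ha i))
  · calc coeff (Finsupp.single j 1) (∑ i, (f (a i) • b i + f (b i) • a i))
        = f (pderiv j (∑ i, a i * b i)) := by
          simp only [map_sum, pderiv_mul_of_isHomogeneous_one (ha _) (hb _), coeff_sum, coeff_add,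
            coeff_smul, map_add, map_smul, smul_eq_mul, mul_comm, add_comm]
      _ = 0 := hf j

lemma sum_sub_smul_mul_sub_smul [CommRing R] [NoZeroDivisors R] [NeZero (2 : R)]
    {a b : ι → MvPolynomial σ R} (ha : ∀ i, (a i).IsHomogeneous 1) (hb : ∀ i, (b i).IsHomogeneous 1)
    {f : MvPolynomial σ R →ₗ[R] R} (hf : ∀ j, f (pderiv j (∑ i, a i * b i)) = 0)
    (u : MvPolynomial σ R) :
    ∑ i, (a i - f (a i) • u) * (b i - f (b i) • u) = ∑ i, a i * b i := by
  have hcontr : ∑ i, (f (a i) • b i + f (b i) • a i) = 0 := sum_smul_add_smul_eq_zero ha hb hf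
  have hdouble : 2 * ∑ i, f (a i) * f (b i) = 0 := by
    simpa [mul_comm, ← two_mul, Finset.mul_sum] using congrArg f hcontr
  have hprod : ∑ i, f (a i) * f (b i) = 0 := (mul_eq_zero_iff_left two_ne_zero).1 hdouble
  calc ∑ i, (a i - f (a i) • u) * (b i - f (b i) • u)
      = ∑ i, a i * b i - u * ∑ i, (f (a i) • b i + f (b i) • a i)
          + u ^ 2 * C (∑ i, f (a i) * f (b i)) := by
        simp only [map_sum, Finset.mul_sum, ← Finset.sum_sub_distrib, ← Finset.sum_add_distrib,
          smul_eq_C_mul, map_mul]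
        exact Finset.sum_congr rfl fun i _ => by ring
    _ = ∑ i, a i * b i := by simp [hcontr, hprod]

end LinearForms

section Rank

variable {σ : Type*} {P Q : MvPolynomial σ ℂ} {r s : ℕ}

lemma HasRep.add (hP : HasRep P r) (hQ : HasRep Q s) : HasRep (P + Q) (r + s) := by
  obtain ⟨a, b, ha, hb, rfl⟩ := hP
  obtain ⟨c, d, hc, hd, rfl⟩ := hQ
  have hac : ∀ i, IsLinForm (Fin.append a c i) :=
    Fin.addCases (by simpa using ha) (by simpa using hc)
  have hbd : ∀ i, IsLinForm (Fin.append b d i) :=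
    Fin.addCases (by simpa using hb) (by simpa using hd)
  exact ⟨Fin.append a c, Fin.append b d, hac, hbd, by simp [Fin.sum_univ_add]⟩

lemma hasRep_zero (r : ℕ) : HasRep (0 : MvPolynomial σ ℂ) r :=
  ⟨0, 0, fun _ => isHomogeneous_zero _ _ _, fun _ => isHomogeneous_zero _ _ _, by simp⟩

lemma HasRep.mono (hQ : HasRep Q r) (hrs : r ≤ s) : HasRep Q s := by
  simpa [Nat.add_sub_cancel' hrs] using hQ.add (hasRep_zero (s - r))

lemma exists_hasRep_of_isHomogeneous_two (hQ : Q.IsHomogeneous 2) : ∃ k, HasRep Q k := by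
  have hmem : Q ∈ homogeneousSubmodule σ ℂ 1 * homogeneousSubmodule σ ℂ 1 := by
    rwa [← pow_two, homogeneousSubmodule_one_pow]
  refine Submodule.mul_induction_on hmem (fun a ha b hb => ?_) fun _ _ => ?_
  · exact ⟨1, fun _ => a, fun _ => b, fun _ => ha, fun _ => hb, by simp⟩
  · rintro ⟨k, hk⟩ ⟨l, hl⟩
    exact ⟨k + l, hk.add hl⟩

lemma hasRep_of_rankS_le (hQ : Q.IsHomogeneous 2) (hr : rankS Q ≤ r) : HasRep Q r :=
  HasRep.mono (Nat.sInf_mem (exists_hasRep_of_isHomogeneous_two hQ)) hr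

lemma HasRep.exists_pderivSpan_le_span_range (hQ : HasRep Q r) :
    ∃ v : Fin r ⊕ Fin r → MvPolynomial σ ℂ,
      (∀ k, IsLinForm (v k)) ∧ pderivSpan Q ≤ Submodule.span ℂ (Set.range v) := by
  obtain ⟨a, b, ha, hb, rfl⟩ := hQ
  refine ⟨Sum.elim a b, Sum.forall.2 ⟨ha, hb⟩, pderivSpan_le_iff.2 fun j => ?_⟩
  rw [map_sum]
  refine Submodule.sum_mem _ fun i _ => ?_
  rw [pderiv_mul_of_isHomogeneous_one (ha i) (hb i)]
  exact add_mem (Submodule.smul_mem _ _ (Submodule.subset_span ⟨Sum.inr i, rfl⟩))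
    (Submodule.smul_mem _ _ (Submodule.subset_span ⟨Sum.inl i, rfl⟩))

lemma hasRep_of_notMem_pderivSpan {k : ℕ} {a b : Fin (k + 1) → MvPolynomial σ ℂ}
    (ha : ∀ i, IsLinForm (a i)) (hb : ∀ i, IsLinForm (b i)) {i₀ : Fin (k + 1)}
    (hi₀ : a i₀ ∉ pderivSpan (∑ i, a i * b i)) : HasRep (∑ i, a i * b i) k := by
  obtain ⟨g, hg, hker⟩ := Submodule.exists_le_ker_of_notMem hi₀
  let f := (g (a i₀))⁻¹ • g
  have hf₁ : f (a i₀) = 1 := inv_mul_cancel₀ hg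
  have hf : ∀ j, f (pderiv j (∑ i, a i * b i)) = 0 := fun j => by
    have hgj : g (pderiv j (∑ i, a i * b i)) = 0 := pderivSpan_le_iff.1 hker j
    simp only [f, LinearMap.smul_apply, hgj, smul_zero]
  have hlin : ∀ {p : MvPolynomial σ ℂ}, IsLinForm p → IsLinForm (p - f p • a i₀) := fun hp =>
    (homogeneousSubmodule σ ℂ 1).sub_mem hp (Submodule.smul_mem _ _ (ha i₀))
  refine ⟨fun i => a (i₀.succAbove i) - f (a (i₀.succAbove i)) • a i₀,
    fun i => b (i₀.succAbove i) - f (b (i₀.succAbove i)) • a i₀,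
    fun _ => hlin (ha _), fun _ => hlin (hb _), ?_⟩
  rw [← sum_sub_smul_mul_sub_smul ha hb hf (a i₀), Fin.sum_univ_succAbove _ i₀, hf₁, one_smul,
    sub_self, zero_mul, zero_add]

lemma mem_pderivSpan_of_le_rankS {a b : Fin s → MvPolynomial σ ℂ} (ha : ∀ i, IsLinForm (a i))
    (hb : ∀ i, IsLinForm (b i)) (hs : s ≤ rankS (∑ i, a i * b i)) (i : Fin s) :
    a i ∈ pderivSpan (∑ i, a i * b i) := by
  by_contra hi
  cases s with
  | zero => exact i.elim0
  | succ k =>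
    have hle : rankS (∑ i, a i * b i) ≤ k := Nat.sInf_le (hasRep_of_notMem_pderivSpan ha hb hi)
    omega

lemma MS_le_pderivSpan (Q : MvPolynomial σ ℂ) : MS Q ≤ pderivSpan Q := by
  refine iSup_le ?_
  rintro ⟨⟨a, b⟩, ha, hb, hab⟩
  have hba : Q = ∑ i, b i * a i := by simpa only [mul_comm] using hab
  refine Submodule.span_le.2 (Set.union_subset ?_ ?_) <;> rintro _ ⟨i, rfl⟩
  · have hi := mem_pderivSpan_of_le_rankS ha hb (congrArg rankS hab).le i
    rwa [← hab] at hi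
  · have hi := mem_pderivSpan_of_le_rankS hb ha (congrArg rankS hba).le i
    rwa [← hba] at hi

end Rank

lemma finrank_span_pair_le_two {R M : Type*} [Semiring R] [StrongRankCondition R]
    [AddCommMonoid M] [Module R M] (x y : M) :
    Module.finrank R (Submodule.span R {x, y}) ≤ 2 := by
  classical exact_mod_cast (finrank_span_finset_le_card {x, y}).trans Finset.card_le_two

theorem stmt_6_general {σ : Type*} {L : Submodule ℂ (MvPolynomial σ ℂ)} [FiniteDimensional ℂ L]
    (hL : L ≤ homogeneousSubmodule σ ℂ 2) (r : ℕ) :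
    ∃ V : Submodule ℂ (MvPolynomial σ ℂ),
      (∀ v ∈ V, IsLinForm v) ∧ Module.finrank ℂ V ≤ Module.finrank ℂ L * (2 * r) ∧
      ∀ P ∈ L, rankS P ≤ r → MS P ≤ V := by
  let S : Set (MvPolynomial σ ℂ) := {P | P ∈ L ∧ HasRep P r}
  have hSL : Submodule.span ℂ S ≤ L := Submodule.span_le.2 fun _ hP => hP.1
  have : FiniteDimensional ℂ (Submodule.span ℂ S) := Submodule.finiteDimensional_of_le hSL
  obtain ⟨e, heS, hspan, -⟩ := Submodule.exists_fun_fin_finrank_span_eq ℂ S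
  choose v hv hev using fun k => (heS k).2.exists_pderivSpan_le_span_range
  let w : Fin (Module.finrank ℂ (Submodule.span ℂ S)) × (Fin r ⊕ Fin r) → MvPolynomial σ ℂ :=
    fun k => v k.1 k.2
  refine ⟨Submodule.span ℂ (Set.range w), fun p hp => ?_, ?_, fun P hP hr => ?_⟩
  · have hw : Submodule.span ℂ (Set.range w) ≤ homogeneousSubmodule σ ℂ 1 :=
      Submodule.span_le.2 (Set.range_subset_iff.2 fun k => hv k.1 k.2)
    exact hw hp
  · calc Module.finrank ℂ (Submodule.span ℂ (Set.range w))
        ≤ Module.finrank ℂ (Submodule.span ℂ S) * (2 * r) := by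
          simpa [two_mul, Set.finrank] using finrank_range_le_card (R := ℂ) w
      _ ≤ Module.finrank ℂ L * (2 * r) := Nat.mul_le_mul_right _ (Submodule.finrank_mono hSL)
  · have hPspan : P ∈ Submodule.span ℂ (Set.range e) :=
      hspan.ge (Submodule.subset_span ⟨hP, hasRep_of_rankS_le (hL hP) hr⟩)
    refine (MS_le_pderivSpan P).trans (pderivSpan_le_of_mem_span ?_ hPspan)
    rintro _ ⟨k, rfl⟩
    exact (hev k).trans (Submodule.span_mono (Set.range_subset_iff.2 fun m => ⟨(k, m), rfl⟩))

/-- for quadratics `Q, Q'` and `r : ℕ` there is a space `V` of linear forms,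
`dim V ≤ 8r`, containing the minimal space of every combination `αQ + βQ'` of rank ≤ r. -/
theorem stmt_6 {n : ℕ} (Q Q' : MvPolynomial (Fin n) ℂ)
    (hQ : Q.IsHomogeneous 2) (hQ' : Q'.IsHomogeneous 2) (r : ℕ) :
    ∃ V : Submodule ℂ (MvPolynomial (Fin n) ℂ),
      (∀ v ∈ V, IsLinForm v) ∧ Module.finrank ℂ V ≤ 8 * r ∧
      ∀ α β : ℂ, rankS (α • Q + β • Q') ≤ r → MS (α • Q + β • Q') ≤ V := by
  have hL : Submodule.span ℂ {Q, Q'} ≤ homogeneousSubmodule (Fin n) ℂ 2 :=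
    Submodule.span_le.2 (Set.pair_subset hQ hQ')
  have := FiniteDimensional.span_of_finite ℂ (Set.toFinite {Q, Q'})
  obtain ⟨V, hV, hVdim, hMS⟩ := stmt_6_general hL r
  exact ⟨V, hV, hVdim.trans (by nlinarith [finrank_span_pair_le_two (R := ℂ) Q Q']),
    fun α β => hMS _ (Submodule.mem_span_pair.2 ⟨α, β, rfl⟩)⟩
end
end

section
/- Let A, B, C be n-variate homogeneous quadratic polynomials over C such that C vanishes at every common zero of A and B (equivalently C ∈ \sqrt{⟨A,B⟩}). Then at least one of the following holds: (i) C is in the linear span of A and B; (ii) there exists a nontrivial linear combination αA + βB equal to ℓ^2 for some linear form ℓ; (iii) there exist two linear forms ℓ_1 and ℓ_2 such that A, B, C all lie in the ideal ⟨ℓ_1, ℓ_2⟩. -/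
open MvPolynomial

noncomputable section

/-!
Suppose first that the quadrics `A = 0` and `B = 0` meet transversally at a point `p`, with tangent
forms `a` and `b` there. Projection from `p` is birational on the quadric `A = 0`, with inverse
`x ↦ a(x) x - A(x) p`, and it sends the base locus into the cubic `R = a B - b A`. So if `C`, with
tangent form `c` at `p`, vanishes on the base locus, then `R` divides a power of `a (a C - c A)`,
and likewise of `b (b C - c B)`. If `R` is squarefree, it divides `a C - c A` and `b C - c B`, and
comparing degrees gives `C ∈ span {A, B}`. If `R` has a multiple factor, it is divisible by the
square of a linear form `l`, and reducing modulo `l` yields a second linear form `k` with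
`A, B ∈ ⟨l, k⟩`; this ideal is prime, so it contains `C`.

If there is no transversal point, some member `G` of the pencil has a vertex which is not a vertex
of the whole pencil. Moving along that vertex shows that `G` is singular at all of its zeros, so `G`
is the square of a linear form.
-/

open QuadraticMap (polar)

section QuadraticForm

section CommRing

variable {R E : Type*} [CommRing R] [AddCommGroup E] [Module R E]

lemma quadraticForm_map_add_smul (Q : QuadraticForm R E) (u v : E) (s : R) :
    Q (u + s • v) = Q u + s * polar Q u v + s ^ 2 * Q v := by
  rw [QuadraticMap.map_add Q, QuadraticMap.map_smul, QuadraticMap.polar_smul_right]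
  simp only [smul_eq_mul]
  ring

lemma polarBilin_smul_add_smul (F G : QuadraticForm R E) (α β : R) (v : E) :
    (α • F + β • G).polarBilin v = α • F.polarBilin v + β • G.polarBilin v := by
  ext x
  simp [QuadraticMap.polar_add, QuadraticMap.polar_smul]

lemma polarBilin_add_smul_of_eq_zero {Q : QuadraticForm R E} {v : E}
    (hv : Q.polarBilin v = 0) (u : E) (s : R) :
    Q.polarBilin (u + s • v) = Q.polarBilin u := by
  simp [hv]

lemma polar_eq_zero_of_polarBilin_eq_zero {Q : QuadraticForm R E} {v : E}
    (hv : Q.polarBilin v = 0) (u : E) : polar Q u v = 0 := by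
  rw [QuadraticMap.polar_comm]
  exact LinearMap.congr_fun hv u

end CommRing

variable {K E : Type*} [Field K] [AddCommGroup E] [Module K E]

lemma quadraticForm_eq_zero_of_polarBilin_eq_zero [NeZero (2 : K)] {Q : QuadraticForm K E} {v : E}
    (hv : Q.polarBilin v = 0) : Q v = 0 := by
  have h := polar_eq_zero_of_polarBilin_eq_zero hv v
  rw [QuadraticMap.polar_self, two_smul, ← two_mul] at h
  exact (mul_eq_zero.1 h).resolve_left two_ne_zero

lemma exists_map_add_smul_eq_zero_of_polar_ne_zero {Q : QuadraticForm K E} {u v : E}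
    (hv : Q v = 0) (huv : polar Q u v ≠ 0) : ∃ s : K, Q (u + s • v) = 0 := by
  refine ⟨-Q u / polar Q u v, ?_⟩
  rw [quadraticForm_map_add_smul, hv]
  field_simp
  ring

lemma exists_map_add_smul_eq_zero [IsAlgClosed K] [NeZero (2 : K)] {Q : QuadraticForm K E} {v : E}
    (hv : Q v ≠ 0) (u : E) : ∃ s : K, Q (u + s • v) = 0 := by
  obtain ⟨s, hs⟩ := exists_quadratic_eq_zero hv
    (IsAlgClosed.exists_eq_mul_self (discrim (Q v) (polar Q u v) (Q u)))
  exact ⟨s, by rw [quadraticForm_map_add_smul, ← hs]; ring⟩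

lemma exists_linear_sq_of_polarBilin_eq_zero [IsAlgClosed K] [NeZero (2 : K)]
    {Q : QuadraticForm K E} (hQ : ∀ x, Q x = 0 → Q.polarBilin x = 0) :
    ∃ φ : Module.Dual K E, ∀ x, Q x = φ x ^ 2 := by
  by_cases h0 : ∀ u, Q u = 0
  · exact ⟨0, fun x => by simp [h0]⟩
  obtain ⟨u, hu⟩ := not_forall.1 h0
  obtain ⟨z, hz⟩ := IsAlgClosed.exists_eq_mul_self (Q u)
  have h2 : (2 : K) ≠ 0 := two_ne_zero
  have hz0 : z ≠ 0 := by rintro rfl; exact hu (by simpa using hz)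
  refine ⟨(2 * z)⁻¹ • Q.polarBilin u, fun x => ?_⟩
  obtain ⟨s, hs⟩ := exists_map_add_smul_eq_zero hu x
  have hux : polar Q x u = -(2 * s * Q u) := by
    have h := LinearMap.congr_fun (hQ _ hs) u
    rw [QuadraticMap.polarBilin_apply_apply, QuadraticMap.polar_add_left,
      QuadraticMap.polar_smul_left, QuadraticMap.polar_self, LinearMap.zero_apply] at h
    simp only [smul_eq_mul, nsmul_eq_mul, Nat.cast_ofNat] at h
    linear_combination h
  have hx : Q x = s ^ 2 * Q u := by
    rw [quadraticForm_map_add_smul] at hs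
    linear_combination hs - s * hux
  rw [LinearMap.smul_apply, QuadraticMap.polarBilin_apply_apply, QuadraticMap.polar_comm, hux, hx,
    hz, smul_eq_mul]
  field_simp

lemma polarBilin_eq_zero_of_off_hyperplane [Infinite K] {Q : QuadraticForm K E}
    {φ : Module.Dual K E} (hφ : φ ≠ 0) (h : ∀ x, Q x = 0 → φ x ≠ 0 → Q.polarBilin x = 0)
    {y : E} (hy : Q y = 0) : Q.polarBilin y = 0 := by
  by_contra hQy
  have hφy : φ y = 0 := by_contra fun hne => hQy (h y hy hne)
  obtain ⟨w, hw⟩ := Module.Dual.exists_forall_ne_zero_of_forall_exists ![Q.polarBilin y, φ]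
    (Fin.forall_fin_two.2 ⟨DFunLike.ne_iff.1 hQy, DFunLike.ne_iff.1 hφ⟩)
  obtain ⟨hQw, hφw⟩ : polar Q y w ≠ 0 ∧ φ w ≠ 0 := Fin.forall_fin_two.1 hw
  rw [QuadraticMap.polar_comm] at hQw
  obtain ⟨s, hs⟩ := exists_map_add_smul_eq_zero_of_polar_ne_zero hy hQw
  have hpolar := LinearMap.congr_fun (h _ hs (by simpa [hφy] using hφw)) y
  refine hQw ?_
  simpa [QuadraticMap.polar_self, hy] using hpolar

end QuadraticForm

section Pencil

open Module Submodule

variable {K : Type*} [Field K]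

lemma span_pair_eq_span_pair {V : Type*} [AddCommGroup V] [Module K V] {f g u v : V}
    (hu : u ∈ span K {f, g}) (hv : v ∈ span K {f, g}) (huv : LinearIndependent K ![u, v]) :
    span K {u, v} = span K {f, g} := by
  have hle : span K {u, v} ≤ span K {f, g} := span_le.2 (Set.pair_subset hu hv)
  have : FiniteDimensional K (span K {f, g}) := FiniteDimensional.span_of_finite K (by simp)
  refine eq_of_le_of_finrank_le hle ?_
  have hrank : finrank K (span K {u, v}) = 2 := by
    rw [← Matrix.range_cons_cons_empty u v ![], finrank_span_eq_card huv, Fintype.card_fin]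
  classical
  exact hrank ▸ (finrank_span_le_card _).trans (by simpa using Finset.card_le_two)

lemma exists_smul_add_smul_apply_eq_zero [IsAlgClosed K] {V W : Type*} [AddCommGroup V]
    [Module K V] [AddCommGroup W] [Module K W] [FiniteDimensional K V] [FiniteDimensional K W]
    [Nontrivial V] (hVW : finrank K V = finrank K W) (f g : V →ₗ[K] W) :
    ∃ (α β : K) (v : V), (α, β) ≠ (0, 0) ∧ v ≠ 0 ∧ α • f v + β • g v = 0 := by
  by_cases hg : Function.Injective g
  · let e := LinearEquiv.ofInjectiveOfFinrankEq g hg hVW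
    obtain ⟨c, hc⟩ := Module.End.exists_eigenvalue (e.symm.toLinearMap ∘ₗ f)
    obtain ⟨v, hv⟩ := hc.exists_hasEigenvector
    have hfv : f v = c • g v := by
      have h : e.symm (f v) = c • v := hv.apply_eq_smul
      rw [LinearEquiv.symm_apply_eq, map_smul] at h
      exact h
    exact ⟨1, -c, v, by simp, hv.2, by simp [hfv]⟩
  · rw [injective_iff_map_eq_zero] at hg
    push Not at hg
    obtain ⟨v, hgv, hv⟩ := hg
    exact ⟨0, 1, v, by simp, hv, by simp [hgv]⟩

variable {E : Type*} [AddCommGroup E] [Module K E]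

lemma exists_smul_add_smul_apply_eq_zero_of_symm [IsAlgClosed K] [FiniteDimensional K E]
    {f g : E →ₗ[K] Dual K E} (hf : ∀ x y, f x y = f y x) (hg : ∀ x y, g x y = g y x)
    (hf0 : f ≠ 0) :
    ∃ (α β : K) (v : E), (α, β) ≠ (0, 0) ∧ (f v ≠ 0 ∨ g v ≠ 0) ∧ α • f v + β • g v = 0 := by
  let N := LinearMap.ker f ⊓ LinearMap.ker g
  have hfN (x : E) : f x ∈ N.dualAnnihilator := (mem_dualAnnihilator _).2 fun k hk => by
    rw [hf, show f k = 0 from hk.1, LinearMap.zero_apply]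
  have hgN (x : E) : g x ∈ N.dualAnnihilator := (mem_dualAnnihilator _).2 fun k hk => by
    rw [hg, show g k = 0 from hk.2, LinearMap.zero_apply]
  let f' : E ⧸ N →ₗ[K] N.dualAnnihilator :=
    N.liftQ (M₂ := N.dualAnnihilator) (f.codRestrict N.dualAnnihilator hfN)
      (by rw [LinearMap.ker_codRestrict]; exact inf_le_left)
  let g' : E ⧸ N →ₗ[K] N.dualAnnihilator :=
    N.liftQ (M₂ := N.dualAnnihilator) (g.codRestrict N.dualAnnihilator hgN)
      (by rw [LinearMap.ker_codRestrict]; exact inf_le_right)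
  have : Nontrivial (E ⧸ N) := Submodule.Quotient.nontrivial_iff.2 fun hN =>
    hf0 (LinearMap.ker_eq_top.1 (top_le_iff.1 (hN.ge.trans inf_le_left)))
  obtain ⟨α, β, w, hαβ, hw, h⟩ :=
    exists_smul_add_smul_apply_eq_zero (V := E ⧸ N) (W := N.dualAnnihilator)
      (Subspace.quotEquivAnnihilator N).finrank_eq f' g'
  obtain ⟨v, rfl⟩ := N.mkQ_surjective w
  refine ⟨α, β, v, hαβ, ?_, congrArg Subtype.val h⟩
  by_contra! hv
  exact hw ((Submodule.Quotient.mk_eq_zero N).2 hv)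

/-- Every common zero of the linear system `P` of quadratic forms is a singular point of some
nonzero member of `P`. For independent `F` and `G` spanning `P` this says that the quadrics `F = 0`
and `G = 0` meet transversally nowhere. -/
def HasSingularBaseLocus (P : Submodule K (QuadraticForm K E)) : Prop :=
  ∀ y, (∀ Q ∈ P, Q y = 0) → ∃ Q ∈ P, Q ≠ 0 ∧ Q.polarBilin y = 0

lemma apply_eq_zero_of_mem_span_pair {F G Q : QuadraticForm K E} (hQ : Q ∈ span K {F, G}) {y : E}
    (hF : F y = 0) (hG : G y = 0) : Q y = 0 := by
  obtain ⟨α, β, rfl⟩ := mem_span_pair.1 hQ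
  simp [hF, hG]

lemma linearIndependent_pair_of_polarBilin {F G : QuadraticForm K E} {v : E} (hG : G ≠ 0)
    (hGv : G.polarBilin v = 0) (hFv : F.polarBilin v ≠ 0) : LinearIndependent K ![F, G] := by
  refine LinearIndependent.pair_iff.2 fun α β h => ?_
  have hα : α = 0 := by
    have hv := polarBilin_smul_add_smul F G α β v
    rw [h, hGv, smul_zero, add_zero] at hv
    exact (smul_eq_zero.1 (hv.symm.trans (by ext; simp [polar]))).resolve_right hFv
  subst hα
  exact ⟨rfl, (smul_eq_zero.1 (by simpa using h)).resolve_right hG⟩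

/- Each isotropic vector `y` of `G` with `polar F y p ≠ 0` moves along `p`, where `G` is constant,
to a common zero of `F` and `G`. -/
lemma HasSingularBaseLocus.polarBilin_eq_zero_of_isotropic [Infinite K] [NeZero (2 : K)]
    {F G : QuadraticForm K E} (hs : HasSingularBaseLocus (span K {F, G})) {p : E}
    (hFp : F p = 0) (hFp' : F.polarBilin p ≠ 0) (hGp : G.polarBilin p = 0) {y : E} (hy : G y = 0) :
    G.polarBilin y = 0 := by
  refine polarBilin_eq_zero_of_off_hyperplane hFp' (fun y hGy hpy => ?_) hy
  rw [QuadraticMap.polarBilin_apply_apply, QuadraticMap.polar_comm] at hpy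
  obtain ⟨s, hFs⟩ := exists_map_add_smul_eq_zero_of_polar_ne_zero hFp hpy
  have hGs : G (y + s • p) = 0 := by
    rw [quadraticForm_map_add_smul, hGy, polar_eq_zero_of_polarBilin_eq_zero hGp,
      quadraticForm_eq_zero_of_polarBilin_eq_zero hGp]
    ring
  obtain ⟨Q, hQ, hQ0, hQs⟩ := hs _ fun Q hQ => apply_eq_zero_of_mem_span_pair hQ hFs hGs
  obtain ⟨α, β, rfl⟩ := mem_span_pair.1 hQ
  rw [polarBilin_smul_add_smul, polarBilin_add_smul_of_eq_zero hGp] at hQs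
  have hα : α * polar F y p = 0 := by
    simpa [polar_eq_zero_of_polarBilin_eq_zero hGp, QuadraticMap.polar_self, hFp]
      using LinearMap.congr_fun hQs p
  obtain rfl := (mul_eq_zero.1 hα).resolve_right hpy
  rw [zero_smul, zero_add] at hQ0 hQs
  exact (smul_eq_zero.1 hQs).resolve_left fun hβ => hQ0 (by rw [hβ, zero_smul])

lemma polarBilin_eq_zero_of_common_zeros [IsAlgClosed K] [NeZero (2 : K)]
    {F G : QuadraticForm K E} (h : ∀ y, F y = 0 → G y = 0 → G.polarBilin y = 0) {v : E}
    (hFv : F v ≠ 0) (hGv : G.polarBilin v = 0) {u : E} (hu : G u = 0) : G.polarBilin u = 0 := by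
  obtain ⟨s, hFs⟩ := exists_map_add_smul_eq_zero hFv u
  rw [← polarBilin_add_smul_of_eq_zero hGv u s]
  refine h _ hFs ?_
  rw [quadraticForm_map_add_smul, hu, polar_eq_zero_of_polarBilin_eq_zero hGv,
    quadraticForm_eq_zero_of_polarBilin_eq_zero hGv]
  ring

lemma exists_mem_span_pair_polarBilin_eq_zero [IsAlgClosed K] [NeZero (2 : K)]
    [FiniteDimensional K E] {f g : QuadraticForm K E} (hfg : LinearIndependent K ![f, g]) :
    ∃ F ∈ span K {f, g}, ∃ G ∈ span K {f, g}, ∃ v : E,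
      G ≠ 0 ∧ G.polarBilin v = 0 ∧ F.polarBilin v ≠ 0 := by
  have hf : f ≠ 0 := hfg.ne_zero 0
  have hf0 : f.polarBilin ≠ 0 := fun h => hf <|
    QuadraticMap.ext fun x => quadraticForm_eq_zero_of_polarBilin_eq_zero (by rw [h]; rfl)
  obtain ⟨α, β, v, hαβ, hv, h⟩ := exists_smul_add_smul_apply_eq_zero_of_symm
    (f := f.polarBilin) (g := g.polarBilin)
    (fun x y => QuadraticMap.polar_comm f x y) (fun x y => QuadraticMap.polar_comm g x y) hf0
  have hG0 : α • f + β • g ≠ 0 := fun h0 => hαβ <| by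
    obtain ⟨rfl, rfl⟩ := LinearIndependent.pair_iff.1 hfg α β h0
    rfl
  have hG : α • f + β • g ∈ span K {f, g} := mem_span_pair.2 ⟨α, β, rfl⟩
  rw [← polarBilin_smul_add_smul] at h
  rcases hv with hv | hv
  · exact ⟨f, subset_span (by simp), _, hG, v, hG0, h, hv⟩
  · exact ⟨g, subset_span (by simp), _, hG, v, hG0, h, hv⟩

theorem HasSingularBaseLocus.exists_linear_sq [IsAlgClosed K] [NeZero (2 : K)]
    [FiniteDimensional K E] {f g : QuadraticForm K E} (hfg : LinearIndependent K ![f, g])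
    (hs : HasSingularBaseLocus (span K {f, g})) :
    ∃ Q ∈ span K {f, g}, Q ≠ 0 ∧ ∃ φ : Dual K E, ∀ x, Q x = φ x ^ 2 := by
  have span_eq {F G : QuadraticForm K E} {v : E} (hF : F ∈ span K {f, g}) (hG : G ∈ span K {f, g})
      (hG0 : G ≠ 0) (hGv : G.polarBilin v = 0) (hFv : F.polarBilin v ≠ 0) :
      span K {F, G} = span K {f, g} :=
    span_pair_eq_span_pair hF hG (linearIndependent_pair_of_polarBilin hG0 hGv hFv)
  by_cases hker : ∀ y, (∀ Q ∈ span K {f, g}, Q y = 0) → ∀ Q ∈ span K {f, g}, Q.polarBilin y = 0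
  · obtain ⟨F, hF, G, hG, v, hG0, hGv, hFv⟩ := exists_mem_span_pair_polarBilin_eq_zero hfg
    have hcommon (y : E) (hFy : F y = 0) (hGy : G y = 0) (Q) (hQ : Q ∈ span K {f, g}) :
        Q.polarBilin y = 0 :=
      hker y (fun Q hQ => apply_eq_zero_of_mem_span_pair
        (span_eq hF hG hG0 hGv hFv ▸ hQ) hFy hGy) Q hQ
    have hFv0 : F v ≠ 0 := fun hFv0 =>
      hFv (hcommon v hFv0 (quadraticForm_eq_zero_of_polarBilin_eq_zero hGv) F hF)
    exact ⟨G, hG, hG0, exists_linear_sq_of_polarBilin_eq_zero fun u =>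
      polarBilin_eq_zero_of_common_zeros (fun y hFy hGy => hcommon y hFy hGy G hG) hFv0 hGv⟩
  · push Not at hker
    obtain ⟨p, hp, F, hF, hFp⟩ := hker
    obtain ⟨G, hG, hG0, hGp⟩ := hs p hp
    rw [← span_eq hF hG hG0 hGp hFp] at hs
    exact ⟨G, hG, hG0, exists_linear_sq_of_polarBilin_eq_zero fun u =>
      hs.polarBilin_eq_zero_of_isotropic (hp F hF) hFp hGp⟩

theorem exists_linear_sq_or_exists_linearIndependent_polarBilin [IsAlgClosed K] [NeZero (2 : K)]
    [FiniteDimensional K E] (f g : QuadraticForm K E) :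
    (∃ (α β : K) (φ : Dual K E), (α, β) ≠ (0, 0) ∧ ∀ x, α * f x + β * g x = φ x ^ 2) ∨
      ∃ p, f p = 0 ∧ g p = 0 ∧ LinearIndependent K ![f.polarBilin p, g.polarBilin p] := by
  by_cases hfg : LinearIndependent K ![f, g]
  · by_cases hs : HasSingularBaseLocus (span K {f, g})
    · obtain ⟨Q, hQ, hQ0, φ, hφ⟩ := hs.exists_linear_sq hfg
      obtain ⟨α, β, rfl⟩ := mem_span_pair.1 hQ
      refine .inl ⟨α, β, φ, fun h => hQ0 ?_, hφ⟩
      obtain ⟨rfl, rfl⟩ := Prod.mk.inj h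
      simp
    · unfold HasSingularBaseLocus at hs
      push Not at hs
      obtain ⟨p, hp, hreg⟩ := hs
      refine .inr ⟨p, hp f (subset_span (by simp)), hp g (subset_span (by simp)), ?_⟩
      refine LinearIndependent.pair_iff.2 fun α β h => LinearIndependent.pair_iff.1 hfg α β ?_
      rw [← polarBilin_smul_add_smul] at h
      by_contra h0
      exact hreg _ (mem_span_pair.2 ⟨α, β, rfl⟩) h0 h
  · rw [LinearIndependent.pair_iff] at hfg
    push Not at hfg
    obtain ⟨α, β, h, hαβ⟩ := hfg
    refine .inl ⟨α, β, 0, fun h0 => ?_, fun x => ?_⟩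
    · exact hαβ (Prod.mk.inj h0).1 (Prod.mk.inj h0).2
    · simpa using DFunLike.congr_fun h x

end Pencil


section HomogeneousFactor

variable {σ R : Type*}

attribute [local instance] MvPolynomial.gradedAlgebra in
lemma homogeneousComponent_add_mul_of_isHomogeneous [CommSemiring R] {f : MvPolynomial σ R} {i : ℕ}
    (hf : f.IsHomogeneous i) (j : ℕ) (g : MvPolynomial σ R) :
    homogeneousComponent (i + j) (f * g) = f * homogeneousComponent j g := by
  have h := DirectSum.coe_decompose_mul_add_of_left_mem (homogeneousSubmodule σ R)
    (i := i) (j := j) (b := g) hf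
  simpa only [DirectSum.decompose, Equiv.coe_fn_mk, decomposition.decompose'_apply] using h

lemma homogeneousComponent_add_mul_of_totalDegree_le [CommSemiring R] {f g : MvPolynomial σ R}
    {i j : ℕ} (hf : f.totalDegree ≤ i) (hg : g.totalDegree ≤ j) :
    homogeneousComponent (i + j) (f * g) =
      homogeneousComponent i f * homogeneousComponent j g := by
  classical
  ext d
  have coeff_mul_coeff {e : (σ →₀ ℕ) × (σ →₀ ℕ)} (he : e ∈ Finset.HasAntidiagonal.antidiagonal d) :
      (if d.degree = i + j then coeff e.1 f * coeff e.2 g else 0) =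
        (if e.1.degree = i then coeff e.1 f else 0) *
          if e.2.degree = j then coeff e.2 g else 0 := by
    have hdeg : d.degree = e.1.degree + e.2.degree := by
      rw [← Finset.HasAntidiagonal.mem_antidiagonal.1 he, map_add]
    have hf0 (h : i < e.1.degree) : coeff e.1 f = 0 :=
      coeff_eq_zero_of_totalDegree_lt (hf.trans_lt h)
    have hg0 (h : j < e.2.degree) : coeff e.2 g = 0 :=
      coeff_eq_zero_of_totalDegree_lt (hg.trans_lt h)
    grind
  simp only [coeff_homogeneousComponent, coeff_mul]
  rw [← Finset.sum_congr rfl fun e he => coeff_mul_coeff he, Finset.sum_ite_irrel,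
    Finset.sum_const_zero]

lemma exists_eq_mul_of_dvd_of_isHomogeneous [CommSemiring R] {f g : MvPolynomial σ R} {i j : ℕ}
    (hf : f.IsHomogeneous i) (hg : g.IsHomogeneous (i + j)) (hfg : f ∣ g) :
    ∃ q : MvPolynomial σ R, q.IsHomogeneous j ∧ g = f * q := by
  obtain ⟨q, rfl⟩ := hfg
  refine ⟨_, homogeneousComponent_isHomogeneous j q, ?_⟩
  rw [← homogeneousComponent_add_mul_of_isHomogeneous hf, homogeneousComponent_eq_self hg]

lemma exists_eq_mul_C_of_dvd_of_isHomogeneous [CommSemiring R] {f g : MvPolynomial σ R} {i : ℕ}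
    (hf : f.IsHomogeneous i) (hg : g.IsHomogeneous i) (hfg : f ∣ g) : ∃ c : R, g = f * C c := by
  obtain ⟨q, hq, rfl⟩ := exists_eq_mul_of_dvd_of_isHomogeneous (j := 0) hf hg hfg
  rw [← totalDegree_zero_iff_isHomogeneous, totalDegree_eq_zero_iff_eq_C] at hq
  exact ⟨coeff 0 q, by rw [← hq]⟩

lemma exists_eq_add_of_mem_span_pair_of_isHomogeneous [CommSemiring R] {f g h : MvPolynomial σ R}
    {i j : ℕ} (hf : f.IsHomogeneous i) (hg : g.IsHomogeneous i) (hh : h.IsHomogeneous (i + j))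
    (hfg : h ∈ Ideal.span {f, g}) :
    ∃ u v : MvPolynomial σ R, u.IsHomogeneous j ∧ v.IsHomogeneous j ∧ h = f * u + g * v := by
  obtain ⟨u, v, rfl⟩ := Ideal.mem_span_pair.1 hfg
  refine ⟨_, _, homogeneousComponent_isHomogeneous j u, homogeneousComponent_isHomogeneous j v, ?_⟩
  rw [← homogeneousComponent_add_mul_of_isHomogeneous hf,
    ← homogeneousComponent_add_mul_of_isHomogeneous hg, ← map_add, mul_comm f, mul_comm g,
    homogeneousComponent_eq_self hh]

lemma exists_linear_sq_dvd_of_not_squarefree {K : Type*} [Field K] {F : MvPolynomial σ K}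
    (hF : F.IsHomogeneous 3) (hF0 : F ≠ 0) (hsq : ¬Squarefree F) :
    ∃ l : MvPolynomial σ K, l.IsHomogeneous 1 ∧ l ≠ 0 ∧ l * l ∣ F := by
  simp only [Squarefree, not_forall] at hsq
  obtain ⟨f, ⟨m, rfl⟩, hf⟩ := hsq
  have hm0 : m ≠ 0 := right_ne_zero_of_mul hF0
  have hf0 : f ≠ 0 := left_ne_zero_of_mul (left_ne_zero_of_mul hF0)
  have hdeg : 2 * f.totalDegree + m.totalDegree = 3 := by
    rw [← hF.totalDegree hF0, totalDegree_mul_of_isDomain (mul_ne_zero hf0 hf0) hm0,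
      totalDegree_mul_of_isDomain hf0 hf0, two_mul]
  have hf1 : f.totalDegree ≠ 0 := fun h => by
    rw [totalDegree_eq_zero_iff_eq_C] at h
    have hc : coeff 0 f ≠ 0 := fun hc => hf0 (by rw [h, hc, C_0])
    exact hf (h ▸ hc.isUnit.map C)
  have hlin : f * f * m =
      homogeneousComponent 1 f * homogeneousComponent 1 f * homogeneousComponent 1 m := by
    rw [← homogeneousComponent_add_mul_of_totalDegree_le (by omega) (by omega),
      ← homogeneousComponent_add_mul_of_totalDegree_le (by grind [totalDegree_mul]) (by omega),
      homogeneousComponent_eq_self hF]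
  refine ⟨_, homogeneousComponent_isHomogeneous 1 f, fun hl => hF0 ?_, _, hlin⟩
  rw [hlin, hl, zero_mul, zero_mul]

end HomogeneousFactor

section LinearForm

variable {σ K : Type*} [Field K]

lemma exists_algHom_eq_sub_of_linear {R : Type*} [CommRing R]
    (r : MvPolynomial σ R →ₗ[R] MvPolynomial σ R) :
    ∃ φ : MvPolynomial σ R →ₐ[R] MvPolynomial σ R, ∀ l, l.IsHomogeneous 1 → φ l = l - r l := by
  refine ⟨aeval fun i => X i - r (X i), fun l hl => ?_⟩
  have hspan : l ∈ Submodule.span R (Set.range X) :=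
    homogeneousSubmodule_one_eq_span_X (R := R) ▸ hl
  refine LinearMap.eqOn_span (f := (aeval fun i => X i - r (X i)).toLinearMap)
    (g := LinearMap.id - r) ?_ hspan
  rintro _ ⟨i, rfl⟩
  simp

/- A linear projection onto `span K S` gives the algebra endomorphism `l ↦ l - r l`, whose kernel is
the ideal generated by `S`. -/
lemma isPrime_span_of_isHomogeneous_one {S : Set (MvPolynomial σ K)}
    (hS : ∀ l ∈ S, l.IsHomogeneous 1) : (Ideal.span S).IsPrime := by
  let V := Submodule.span K S
  obtain ⟨r, hr⟩ := V.subtype.exists_leftInverse_of_injective V.ker_subtype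
  obtain ⟨φ, hφ⟩ := exists_algHom_eq_sub_of_linear (V.subtype ∘ₗ r)
  have hmk : (Ideal.Quotient.mkₐ K (Ideal.span S)).comp φ = Ideal.Quotient.mkₐ K _ := by
    refine algHom_ext fun i => ?_
    have hrS : (r (X i) : MvPolynomial σ K) ∈ Ideal.span S :=
      Submodule.span_le_restrictScalars K _ S (r (X i)).2
    simpa [hφ _ (isHomogeneous_X K i)] using Ideal.Quotient.eq_zero_iff_mem.2 hrS
  have hker : Ideal.span S = RingHom.ker φ := by
    refine le_antisymm (Ideal.span_le.2 fun l hl => ?_) fun f hf => ?_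
    · have hrl : r l = ⟨l, Submodule.subset_span hl⟩ :=
        LinearMap.congr_fun hr ⟨l, Submodule.subset_span hl⟩
      simp [hφ l (hS l hl), hrl]
    · have hf' := AlgHom.congr_fun hmk f
      rw [AlgHom.comp_apply, show φ f = 0 from hf, map_zero] at hf'
      exact Ideal.Quotient.eq_zero_iff_mem.1 hf'.symm
  rw [hker]
  exact RingHom.ker_isPrime _

lemma prime_of_isHomogeneous_one {l : MvPolynomial σ K} (hl : l.IsHomogeneous 1) (hl0 : l ≠ 0) :
    Prime l := by
  rw [← Ideal.span_singleton_prime hl0]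
  exact isPrime_span_of_isHomogeneous_one (by simpa using hl)

lemma isRelPrime_of_linearIndependent {a b : MvPolynomial σ K} (ha : a.IsHomogeneous 1)
    (hb : b.IsHomogeneous 1) (hab : LinearIndependent K ![a, b]) : IsRelPrime a b := by
  have ha0 : a ≠ 0 := hab.ne_zero 0
  rw [(prime_of_isHomogeneous_one ha ha0).irreducible.isRelPrime_iff_not_dvd]
  intro hdvd
  obtain ⟨c, rfl⟩ := exists_eq_mul_C_of_dvd_of_isHomogeneous ha hb hdvd
  have h := (LinearIndependent.pair_iff.1 hab) c (-1) (by rw [smul_eq_C_mul]; simp [mul_comm])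
  simp at h

end LinearForm

section Divisibility

lemma dvd_of_isRelPrime_of_dvd_mul {M : Type*} [CommMonoidWithZero M] [IsCancelMulZero M]
    [DecompositionMonoid M] {a b u r : M} (hab : IsRelPrime a b) (ha : r ∣ a * u)
    (hb : r ∣ b * u) : r ∣ u := by
  obtain ⟨s, t, hsa, ⟨w, rfl⟩, rfl⟩ := exists_dvd_and_dvd_of_dvd_mul ha
  rcases eq_or_ne t 0 with rfl | ht
  · simp
  rw [mul_left_comm, mul_comm s, mul_dvd_mul_iff_left ht] at hb
  rw [mul_comm s, mul_dvd_mul_iff_left ht]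
  exact (hab.of_dvd_left hsa).dvd_of_dvd_mul_left hb

lemma dvd_and_dvd_of_isRadical {R : Type*} [CommRing R] [IsDomain R] [DecompositionMonoid R]
    {a b u v r : R} (hr : IsRadical r) (hab : IsRelPrime a b) {m n : ℕ}
    (hau : r ∣ (a * u) ^ m) (hbv : r ∣ (b * v) ^ n) (huv : r ∣ b * u - a * v) :
    r ∣ u ∧ r ∣ v := by
  replace hau := hr _ _ hau
  replace hbv := hr _ _ hbv
  have hbu : r ∣ b * u := by
    refine hr 2 _ ?_
    rw [show (b * u) ^ 2 = a * u * (b * v) + (b * u - a * v) * (b * u) by ring]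
    exact (hau.mul_right _).add (huv.mul_right _)
  have hav : r ∣ a * v := by simpa using hbu.sub huv
  exact ⟨dvd_of_isRelPrime_of_dvd_mul hab hau hbu, dvd_of_isRelPrime_of_dvd_mul hab hav hbv⟩

end Divisibility

section CommonLinearForms

variable {σ K : Type*} [Field K] {A B D a b d l : MvPolynomial σ K}

lemma mem_span_pair_of_squarefree_sub (hA : A.IsHomogeneous 2) (hB : B.IsHomogeneous 2)
    (hD : D.IsHomogeneous 2) (ha : a.IsHomogeneous 1) (hb : b.IsHomogeneous 1)
    (hd : d.IsHomogeneous 1) (hab : LinearIndependent K ![a, b])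
    (hsq : Squarefree (a * B - b * A)) {m n : ℕ}
    (hm : a * B - b * A ∣ (a * (a * D - d * A)) ^ m)
    (hn : a * B - b * A ∣ (b * (b * D - d * B)) ^ n) :
    D ∈ Submodule.span K {A, B} := by
  have ha0 : a ≠ 0 := hab.ne_zero 0
  have hcubic {x y P Q : MvPolynomial σ K} (hx : x.IsHomogeneous 1) (hy : y.IsHomogeneous 1)
      (hP : P.IsHomogeneous 2) (hQ : Q.IsHomogeneous 2) : (x * Q - y * P).IsHomogeneous 3 :=
    (hx.mul hQ).sub (hy.mul hP)
  obtain ⟨hu, hv⟩ := dvd_and_dvd_of_isRadical hsq.isRadical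
    (isRelPrime_of_linearIndependent ha hb hab) hm hn ⟨d, by ring⟩
  obtain ⟨s, hs⟩ := exists_eq_mul_C_of_dvd_of_isHomogeneous (hcubic ha hb hA hB)
    (hcubic ha hd hA hD) hu
  obtain ⟨t, ht⟩ := exists_eq_mul_C_of_dvd_of_isHomogeneous (hcubic ha hb hA hB)
    (hcubic hb hd hB hD) hv
  have hd_eq : d = C s * b - C t * a :=
    mul_left_cancel₀ hsq.ne_zero (by linear_combination b * hs - a * ht)
  have hD_eq : D = C s * B - C t * A :=
    mul_left_cancel₀ ha0 (by linear_combination hs + A * hd_eq)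
  refine Submodule.mem_span_pair.2 ⟨-t, s, ?_⟩
  rw [hD_eq, smul_eq_C_mul, smul_eq_C_mul, C_neg]
  ring

lemma not_dvd_and_dvd_of_linearIndependent (hl : l.IsHomogeneous 1) (hl0 : l ≠ 0)
    (ha : a.IsHomogeneous 1) (hb : b.IsHomogeneous 1) (hab : LinearIndependent K ![a, b]) :
    ¬(l ∣ a ∧ l ∣ b) := fun h =>
  (prime_of_isHomogeneous_one hl hl0).not_isUnit (isRelPrime_of_linearIndependent ha hb hab h.1 h.2)

lemma mem_ideal_span_of_C_mul_mem {I : Ideal (MvPolynomial σ K)} {c : K} (hc : c ≠ 0)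
    (h : C c * A ∈ I) : A ∈ I :=
  (Ideal.unit_mul_mem_iff_mem I (hc.isUnit.map C)).1 h

lemma exists_mem_span_pair_of_dvd_linear_combination (hl : l.IsHomogeneous 1) (hl0 : l ≠ 0)
    (hA : A.IsHomogeneous 2) (hB : B.IsHomogeneous 2) (ha : a.IsHomogeneous 1)
    (hb : b.IsHomogeneous 1) (hab : LinearIndependent K ![a, b]) {s t : K} (hst : (s, t) ≠ (0, 0))
    (hlab : l ∣ C s * a + C t * b) (hR : l * l ∣ a * B - b * A) :
    ∃ k : MvPolynomial σ K, k.IsHomogeneous 1 ∧ A ∈ Ideal.span {l, k} ∧ B ∈ Ideal.span {l, k} := by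
  have hprime := prime_of_isHomogeneous_one hl hl0
  obtain ⟨m, hm⟩ := hR
  obtain ⟨c, hc⟩ := exists_eq_mul_C_of_dvd_of_isHomogeneous hl
    ((ha.C_mul s).add (hb.C_mul t)) hlab
  have hc0 : c ≠ 0 := by
    rintro rfl
    obtain ⟨rfl, rfl⟩ := LinearIndependent.pair_iff.1 hab s t (by simpa [smul_eq_C_mul] using hc)
    exact hst rfl
  have hbA : b * (C s * A + C t * B) = l * (C c * B - C s * l * m) := by
    linear_combination B * hc - C s * hm
  have haA : a * (C s * A + C t * B) = l * (C c * A + C t * l * m) := by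
    linear_combination A * hc + C t * hm
  have hdvd : l ∣ C s * A + C t * B := by
    by_contra h
    exact not_dvd_and_dvd_of_linearIndependent hl hl0 ha hb hab
      ⟨(hprime.dvd_or_dvd ⟨_, haA⟩).resolve_right h, (hprime.dvd_or_dvd ⟨_, hbA⟩).resolve_right h⟩
  obtain ⟨k, hk, hk_eq⟩ := exists_eq_mul_of_dvd_of_isHomogeneous (j := 1) hl
    ((hA.C_mul s).add (hB.C_mul t)) hdvd
  rw [hk_eq, mul_left_comm] at hbA haA
  refine ⟨k, hk, mem_ideal_span_of_C_mul_mem hc0 (Ideal.mem_span_pair.2 ⟨-(C t * m), a, ?_⟩),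
    mem_ideal_span_of_C_mul_mem hc0 (Ideal.mem_span_pair.2 ⟨C s * m, b, ?_⟩)⟩
  · linear_combination mul_left_cancel₀ hl0 haA
  · linear_combination mul_left_cancel₀ hl0 hbA

lemma exists_mem_span_pair_of_not_dvd_linear_combination (hl : l.IsHomogeneous 1) (hl0 : l ≠ 0)
    (hA : A.IsHomogeneous 2) (ha : a.IsHomogeneous 1) (hb : b.IsHomogeneous 1)
    (hlab : ∀ s t : K, l ∣ C s * a + C t * b → s = 0 ∧ t = 0) (hR : l ∣ a * B - b * A) :
    ∃ k : MvPolynomial σ K, k.IsHomogeneous 1 ∧ A ∈ Ideal.span {l, k} ∧ B ∈ Ideal.span {l, k} := by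
  obtain ⟨m, hm⟩ := hR
  have hla : ¬l ∣ a := fun h => one_ne_zero (hlab 1 0 (by simpa using h)).1
  have hbla : b ∉ Ideal.span {l, a} := fun h => by
    obtain ⟨u, v, -, hv, rfl⟩ := exists_eq_add_of_mem_span_pair_of_isHomogeneous (j := 0) hl ha hb h
    rw [← totalDegree_zero_iff_isHomogeneous, totalDegree_eq_zero_iff_eq_C] at hv
    refine one_ne_zero (hlab (-coeff 0 v) 1 ⟨u, ?_⟩).2
    rw [C_neg, ← hv, C_1]
    ring
  have hAla : A ∈ Ideal.span {l, a} :=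
    ((isPrime_span_of_isHomogeneous_one (by simp [hl, ha])).mem_or_mem
      (Ideal.mem_span_pair.2 ⟨-m, B, by linear_combination hm⟩ : b * A ∈ _)).resolve_left hbla
  obtain ⟨u, k, -, hk, rfl⟩ :=
    exists_eq_add_of_mem_span_pair_of_isHomogeneous (j := 1) hl ha hA hAla
  obtain ⟨w, hw⟩ := ((prime_of_isHomogeneous_one hl hl0).dvd_or_dvd
    (⟨m + b * u, by linear_combination hm⟩ : l ∣ a * (B - b * k))).resolve_left hla
  exact ⟨k, hk, Ideal.mem_span_pair.2 ⟨u, a, by ring⟩,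
    Ideal.mem_span_pair.2 ⟨w, b, by linear_combination -hw⟩⟩

lemma exists_mem_span_pair_of_not_squarefree (hA : A.IsHomogeneous 2)
    (hB : B.IsHomogeneous 2) (ha : a.IsHomogeneous 1) (hb : b.IsHomogeneous 1)
    (hab : LinearIndependent K ![a, b]) (hR : ¬Squarefree (a * B - b * A)) :
    ∃ l k : MvPolynomial σ K, l.IsHomogeneous 1 ∧ k.IsHomogeneous 1 ∧
      A ∈ Ideal.span {l, k} ∧ B ∈ Ideal.span {l, k} := by
  obtain ⟨l, hl, hl0, hdvd⟩ : ∃ l : MvPolynomial σ K, l.IsHomogeneous 1 ∧ l ≠ 0 ∧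
      l * l ∣ a * B - b * A := by
    by_cases hR0 : a * B - b * A = 0
    · exact ⟨a, ha, hab.ne_zero 0, hR0 ▸ dvd_zero _⟩
    · exact exists_linear_sq_dvd_of_not_squarefree ((ha.mul hB).sub (hb.mul hA)) hR0 hR
  refine ⟨l, ?_⟩
  suffices ∃ k : MvPolynomial σ K, k.IsHomogeneous 1 ∧ A ∈ Ideal.span {l, k} ∧
      B ∈ Ideal.span {l, k} by simpa [hl] using this
  by_cases hlab : ∀ s t : K, l ∣ C s * a + C t * b → s = 0 ∧ t = 0
  · exact exists_mem_span_pair_of_not_dvd_linear_combination hl hl0 hA ha hb hlab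
      (dvd_of_mul_left_dvd hdvd)
  · push Not at hlab
    obtain ⟨s, t, h, hst⟩ := hlab
    exact exists_mem_span_pair_of_dvd_linear_combination hl hl0 hA hB ha hb hab
      (fun h0 => hst (Prod.mk.inj h0).1 (Prod.mk.inj h0).2) h hdvd

end CommonLinearForms

section Tangent

variable {σ R : Type*} [CommRing R] {A B D a b d : MvPolynomial σ R} {p : σ → R}

/-- The quadric `A = 0` passes through `p` and `a` is the linear equation of its tangent hyperplane
there (zero at a singular point). This is encoded by the expansion of the quadratic polynomial `A`
along the lines through `p`, in which the coefficient of `t ^ 2` vanishes. -/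
def IsTangentForm (p : σ → R) (A a : MvPolynomial σ R) : Prop :=
  ∀ (x : σ → R) (s t : R), eval (s • x + t • p) A = s ^ 2 * eval x A + s * t * eval x a

/- `x ↦ a(x) x - A(x) p` is the second intersection of the quadric `A = 0` with the line joining `p`
to `x`. -/
lemma IsTangentForm.bind₁_eq [IsDomain R] [Infinite R] (hD : IsTangentForm p D d)
    (a A : MvPolynomial σ R) :
    bind₁ (fun i => a * X i - A * C (p i)) D = a * (a * D - d * A) := by
  refine MvPolynomial.funext fun x => ?_
  have hx : (fun i => eval x (a * X i - A * C (p i))) = eval x a • x + (-eval x A) • p := by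
    ext i
    simp only [map_sub, map_mul, eval_X, eval_C, Pi.add_apply, Pi.smul_apply, smul_eq_mul]
    ring
  calc eval x (bind₁ (fun i => a * X i - A * C (p i)) D)
      = eval (eval x a • x + (-eval x A) • p) D := hx ▸ eval₂Hom_bind₁ _ _ _ D
    _ = eval x (a * (a * D - d * A)) := by
      rw [hD]
      simp only [map_sub, map_mul]
      ring

lemma IsTangentForm.exists_dvd_pow [IsDomain R] [Infinite R] (hA : IsTangentForm p A a)
    (hB : IsTangentForm p B b) (hD : IsTangentForm p D d) (hrad : D ∈ (Ideal.span {A, B}).radical) :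
    ∃ n : ℕ, a * B - b * A ∣ (a * (a * D - d * A)) ^ n := by
  obtain ⟨n, hn⟩ := hrad
  obtain ⟨u, v, huv⟩ := Ideal.mem_span_pair.1 hn
  refine ⟨n, a * bind₁ (fun i => a * X i - A * C (p i)) v, ?_⟩
  have h := congrArg (bind₁ fun i => a * X i - A * C (p i)) huv
  rw [map_add, map_mul, map_mul, map_pow, hA.bind₁_eq, hB.bind₁_eq, hD.bind₁_eq] at h
  linear_combination -h

lemma exists_dual_eval_eq (hA : A.IsHomogeneous 1) :
    ∃ φ : Module.Dual R (σ → R), ∀ x, eval x A = φ x := by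
  have hspan : A ∈ Submodule.span R (Set.range X) :=
    homogeneousSubmodule_one_eq_span_X (R := R) ▸ hA
  clear hA
  induction hspan using Submodule.span_induction with
  | mem l hl =>
    obtain ⟨i, rfl⟩ := hl
    exact ⟨LinearMap.proj i, by simp⟩
  | zero => exact ⟨0, by simp⟩
  | add l k _ _ hl hk =>
    obtain ⟨φ, hφ⟩ := hl
    obtain ⟨ψ, hψ⟩ := hk
    exact ⟨φ + ψ, by simp [hφ, hψ]⟩
  | smul c l _ hl =>
    obtain ⟨φ, hφ⟩ := hl
    exact ⟨c • φ, by simp [hφ]⟩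

lemma exists_quadraticForm_eval_eq (hA : A.IsHomogeneous 2) :
    ∃ Q : QuadraticForm R (σ → R), ∀ x, eval x A = Q x := by
  have h : A ∈ homogeneousSubmodule σ R 1 * homogeneousSubmodule σ R 1 := by
    rwa [← sq, homogeneousSubmodule_one_pow]
  clear hA
  induction h using Submodule.mul_induction_on' with
  | mem_mul_mem l hl k hk =>
    obtain ⟨φ, hφ⟩ := exists_dual_eval_eq hl
    obtain ⟨ψ, hψ⟩ := exists_dual_eval_eq hk
    exact ⟨QuadraticMap.linMulLin φ ψ, fun x => by simp [hφ, hψ]⟩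
  | add F _ G _ hF hG =>
    obtain ⟨P, hP⟩ := hF
    obtain ⟨Q, hQ⟩ := hG
    exact ⟨P + Q, by simp [hP, hQ]⟩

lemma exists_isHomogeneous_one_eval_eq [Finite σ] (φ : Module.Dual R (σ → R)) :
    ∃ l : MvPolynomial σ R, l.IsHomogeneous 1 ∧ ∀ x, eval x l = φ x := by
  classical
  have := Fintype.ofFinite σ
  refine ⟨∑ i, C (φ fun j => if i = j then 1 else 0) * X i,
    IsHomogeneous.sum _ _ _ fun i _ => isHomogeneous_C_mul_X _ i, fun x => ?_⟩
  rw [LinearMap.pi_apply_eq_sum_univ φ x]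
  simp [mul_comm]

lemma isTangentForm_of_eval_eq_polarBilin {Q : QuadraticForm R (σ → R)}
    (hQ : ∀ x, eval x A = Q x) (hp : Q p = 0) (ha : ∀ x, eval x a = Q.polarBilin p x) :
    IsTangentForm p A a := fun x s t => by
  rw [hQ, hQ, ha, quadraticForm_map_add_smul, QuadraticMap.map_smul, QuadraticMap.polar_smul_left,
    hp, QuadraticMap.polarBilin_apply_apply, QuadraticMap.polar_comm Q p, smul_eq_mul, smul_eq_mul]
  ring

lemma exists_isTangentForm [Finite σ] (hA : A.IsHomogeneous 2) (hp : eval p A = 0) :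
    ∃ a : MvPolynomial σ R, a.IsHomogeneous 1 ∧ IsTangentForm p A a := by
  obtain ⟨Q, hQ⟩ := exists_quadraticForm_eval_eq hA
  obtain ⟨a, ha, ha_eq⟩ := exists_isHomogeneous_one_eval_eq (Q.polarBilin p)
  exact ⟨a, ha, isTangentForm_of_eval_eq_polarBilin hQ (hQ p ▸ hp) ha_eq⟩

lemma eval_eq_zero_of_mem_radical_span_pair [IsDomain R]
    (hD : D ∈ (Ideal.span {A, B}).radical) (hA : eval p A = 0) (hB : eval p B = 0) :
    eval p D = 0 := by
  have hle : (Ideal.span {A, B}).radical ≤ RingHom.ker (eval p) :=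
    (RingHom.ker_isPrime _).isRadical.radical_le_iff.2
      (Ideal.span_le.2 (Set.pair_subset hA hB))
  exact hle hD

theorem exists_linear_sq_or_exists_linearIndependent_isTangentForm {K : Type*} [Field K]
    [IsAlgClosed K] [NeZero (2 : K)] [Finite σ] {A B : MvPolynomial σ K}
    (hA : A.IsHomogeneous 2) (hB : B.IsHomogeneous 2) :
    (∃ (α β : K) (l : MvPolynomial σ K),
      (α, β) ≠ (0, 0) ∧ l.IsHomogeneous 1 ∧ α • A + β • B = l ^ 2) ∨
    ∃ (p : σ → K) (a b : MvPolynomial σ K), eval p A = 0 ∧ eval p B = 0 ∧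
      a.IsHomogeneous 1 ∧ b.IsHomogeneous 1 ∧ IsTangentForm p A a ∧ IsTangentForm p B b ∧
      LinearIndependent K ![a, b] := by
  have : Infinite K := IsAlgClosed.instInfinite
  obtain ⟨F, hF⟩ := exists_quadraticForm_eval_eq hA
  obtain ⟨G, hG⟩ := exists_quadraticForm_eval_eq hB
  rcases exists_linear_sq_or_exists_linearIndependent_polarBilin F G with
    ⟨α, β, φ, hαβ, hφ⟩ | ⟨p, hFp, hGp, hind⟩
  · obtain ⟨l, hl, hlφ⟩ := exists_isHomogeneous_one_eval_eq φ
    exact .inl ⟨α, β, l, hαβ, hl, MvPolynomial.funext fun x => by simp [hF, hG, hlφ, hφ]⟩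
  · obtain ⟨a, ha, haF⟩ := exists_isHomogeneous_one_eval_eq (F.polarBilin p)
    obtain ⟨b, hb, hbG⟩ := exists_isHomogeneous_one_eval_eq (G.polarBilin p)
    refine .inr ⟨p, a, b, (hF p).trans hFp, (hG p).trans hGp, ha, hb,
      isTangentForm_of_eval_eq_polarBilin hF hFp haF,
      isTangentForm_of_eval_eq_polarBilin hG hGp hbG, ?_⟩
    refine LinearIndependent.pair_iff.2 fun s t hst => LinearIndependent.pair_iff.1 hind s t ?_
    ext1 x
    simpa [haF, hbG] using congrArg (eval x) hst

end Tangent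

theorem stmt_11_general {σ K : Type*} [Finite σ] [Field K] [IsAlgClosed K] [NeZero (2 : K)]
    (A B C : MvPolynomial σ K)
    (hA : A.IsHomogeneous 2) (hB : B.IsHomogeneous 2) (hC : C.IsHomogeneous 2)
    (hrad : C ∈ (Ideal.span {A, B}).radical) :
    C ∈ Submodule.span K ({A, B} : Set (MvPolynomial σ K)) ∨
    (∃ (α β : K) (l : MvPolynomial σ K),
      (α, β) ≠ (0, 0) ∧ l.IsHomogeneous 1 ∧ α • A + β • B = l ^ 2) ∨
    (∃ l k : MvPolynomial σ K, l.IsHomogeneous 1 ∧ k.IsHomogeneous 1 ∧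
      A ∈ Ideal.span {l, k} ∧ B ∈ Ideal.span {l, k} ∧ C ∈ Ideal.span {l, k}) := by
  have : Infinite K := IsAlgClosed.instInfinite
  rcases exists_linear_sq_or_exists_linearIndependent_isTangentForm hA hB with
    hsq | ⟨p, a, b, hAp, hBp, ha, hb, haA, hbB, hab⟩
  · exact .inr (.inl hsq)
  by_cases hR : Squarefree (a * B - b * A)
  · obtain ⟨c, hc, hcC⟩ :=
      exists_isTangentForm hC (eval_eq_zero_of_mem_radical_span_pair hrad hAp hBp)
    obtain ⟨m, hm⟩ := haA.exists_dvd_pow hbB hcC hrad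
    obtain ⟨n, hn⟩ := hbB.exists_dvd_pow haA hcC (Set.pair_comm A B ▸ hrad)
    rw [← neg_sub, neg_dvd] at hn
    exact .inl (mem_span_pair_of_squarefree_sub hA hB hC ha hb hc hab hR hm hn)
  · obtain ⟨l, k, hl, hk, hAlk, hBlk⟩ := exists_mem_span_pair_of_not_squarefree hA hB ha hb hab hR
    have hprime : (Ideal.span {l, k}).IsPrime :=
      isPrime_span_of_isHomogeneous_one (by simp [hl, hk])
    exact .inr (.inr ⟨l, k, hl, hk, hAlk, hBlk, hprime.radical_le_iff.2
      (Ideal.span_le.2 (Set.pair_subset hAlk hBlk)) hrad⟩)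

/-- structure theorem: if `C ∈ √⟨A,B⟩` for homogeneous quadratics `A,B,C`,
then `C ∈ span{A,B}`, or some nontrivial `αA + βB` is a square of a linear form, or
`A, B, C` all lie in an ideal generated by two linear forms. -/
theorem stmt_11 {n : ℕ} (A B C : MvPolynomial (Fin n) ℂ)
    (hA : A.IsHomogeneous 2) (hB : B.IsHomogeneous 2) (hC : C.IsHomogeneous 2)
    (hrad : C ∈ (Ideal.span {A, B}).radical) :
    C ∈ Submodule.span ℂ ({A, B} : Set (MvPolynomial (Fin n) ℂ)) ∨
    (∃ (α β : ℂ) (ℓ : MvPolynomial (Fin n) ℂ),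
      (α, β) ≠ (0, 0) ∧ IsLinForm ℓ ∧ α • A + β • B = ℓ ^ 2) ∨
    (∃ ℓ₁ ℓ₂ : MvPolynomial (Fin n) ℂ, IsLinForm ℓ₁ ∧ IsLinForm ℓ₂ ∧
      A ∈ Ideal.span {ℓ₁, ℓ₂} ∧ B ∈ Ideal.span {ℓ₁, ℓ₂} ∧ C ∈ Ideal.span {ℓ₁, ℓ₂}) :=
  stmt_11_general A B C hA hB hC hrad
end
end

section
/- Let P, Q, T be irreducible homogeneous quadratic polynomials over C with T ∈ \sqrt{⟨P,Q⟩}. Suppose P, Q, T all lie in ⟨v_1, v_2⟩ for two linear forms v_1, v_2; suppose T is not in span{P,Q}; suppose no nontrivial linear combination αP + βQ is a square of a linear form; and suppose MS(P) ⊄ MS(Q). Then there exist linear forms v'_1, v'_2 ∈ span{v_1, v_2} and linear forms ℓ, u and scalars α, β ∈ C such that, up to nonzero constant factors: P = v'_1 ℓ + (v'_2)^2, Q = v'_1 u − (v'_2)^2, and T = v'_2(ℓ + u) + αP + βQ. -/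
open MvPolynomial

noncomputable section

/-!
Write `P = v₁ a₁ + v₂ a₂`, `Q = v₁ b₁ + v₂ b₂` and `T = v₁ t₁ + v₂ t₂` with linear forms `aᵢ`,
`bᵢ`, `tᵢ`. As `MS P` is not contained in `MS Q`, one of `a₁`, `a₂`, say `a₁`, is not in the span
of `v₁, v₂, b₁, b₂`; after a shear of `v₁` it can be treated as a variable that does not occur in
`v₁, v₂, a₂, b₁, b₂`. Solving `P = 0` for it, `a₁ = - v₂ a₂ / v₁`, turns `T` into a multiple of
the prime `Q`, which gives a syzygy `v₁ (T - p P) = q v₂ P + m Q` with `q ≠ 0`, because `T` is not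
in the span of `P` and `Q`. On the other hand `T` lies in the prime ideal `(v₁, a₂, b₂)`, which
contains `P` and `Q`. Comparing the two facts puts first `b₂` and then `a₂` in the span of `v₁`
and `v₂`. Hence `P = v₁ ℓ + k v₂²` and `Q = v₁ u + r v₂²`, and cancelling `v₁` from the syzygy
gives `T`.
-/

section LinearForms

variable {σ R : Type*} [CommSemiring R]

lemma homogeneousComponent_mul_of_isHomogeneous_right {A g : MvPolynomial σ R} (m : ℕ) {d : ℕ}
    (hg : g.IsHomogeneous d) :
    homogeneousComponent (m + d) (A * g) = homogeneousComponent m A * g := by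
  let _ := gradedAlgebra (σ := σ) (R := R)
  simp only [← decomposition.decompose'_apply]
  exact DirectSum.coe_decompose_mul_add_of_right_mem (homogeneousSubmodule σ R) hg

lemma exists_isHomogeneous_mul_of_dvd {g N : MvPolynomial σ R} {m d : ℕ}
    (hg : g.IsHomogeneous d) (hN : N.IsHomogeneous (m + d)) (h : g ∣ N) :
    ∃ B : MvPolynomial σ R, B.IsHomogeneous m ∧ N = B * g := by
  obtain ⟨A, hA⟩ := h
  refine ⟨homogeneousComponent m A, homogeneousComponent_isHomogeneous _ _, ?_⟩
  rw [← homogeneousComponent_mul_of_isHomogeneous_right m hg, mul_comm, ← hA,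
    homogeneousComponent_eq_self hN]

lemma exists_smul_of_dvd {g N : MvPolynomial σ R} {d : ℕ} (hg : g.IsHomogeneous d)
    (hN : N.IsHomogeneous d) (h : g ∣ N) : ∃ c : R, N = c • g := by
  obtain ⟨B, hB, rfl⟩ :=
    exists_isHomogeneous_mul_of_dvd (m := 0) hg (by rwa [zero_add]) h
  rw [← totalDegree_zero_iff_isHomogeneous, totalDegree_eq_zero_iff_eq_C] at hB
  exact ⟨coeff 0 B, by rw [smul_eq_C_mul, ← hB]⟩

variable (σ R) in
/-- The module of linear forms, as a type of its own: a variable of type `LinForm σ R` carries its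
homogeneity with it, and functionals on linear forms are `Module.Dual R (LinForm σ R)`. -/
abbrev LinForm : Type _ := homogeneousSubmodule σ R 1

lemma exists_linForm_of_mem_span_pair {P : MvPolynomial σ R} {v₁ v₂ : LinForm σ R}
    (hP : P.IsHomogeneous 2) (h : P ∈ Ideal.span {(v₁ : MvPolynomial σ R), ↑v₂}) :
    ∃ a₁ a₂ : LinForm σ R, P = v₁ * a₁ + v₂ * a₂ := by
  obtain ⟨A, B, h⟩ := Ideal.mem_span_pair.1 h
  refine ⟨⟨homogeneousComponent 1 A, homogeneousComponent_isHomogeneous _ _⟩,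
    ⟨homogeneousComponent 1 B, homogeneousComponent_isHomogeneous _ _⟩, ?_⟩
  rw [mul_comm, mul_comm (v₂ : MvPolynomial σ R),
    ← homogeneousComponent_mul_of_isHomogeneous_right 1 v₁.2,
    ← homogeneousComponent_mul_of_isHomogeneous_right 1 v₂.2, ← map_add, h]
  exact (homogeneousComponent_eq_self hP).symm

lemma isHomogeneous_two_mul_add_mul (v₁ v₂ a₁ a₂ : LinForm σ R) :
    (v₁ * a₁ + v₂ * a₂ : MvPolynomial σ R).IsHomogeneous 2 :=
  (IsHomogeneous.mul v₁.2 a₁.2).add (IsHomogeneous.mul v₂.2 a₂.2)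

/-- The algebra homomorphism extending a linear map on linear forms, i.e. the universal property
of the polynomial ring as the symmetric algebra on its linear forms. -/
def LinForm.lift {A : Type*} [CommSemiring A] [Algebra R A] (L : LinForm σ R →ₗ[R] A) :
    MvPolynomial σ R →ₐ[R] A :=
  aeval fun i => L ⟨X i, isHomogeneous_X R i⟩

lemma span_range_linForm_X :
    Submodule.span R (Set.range fun i => (⟨X i, isHomogeneous_X R i⟩ : LinForm σ R)) = ⊤ := by
  apply Submodule.map_injective_of_injective (homogeneousSubmodule σ R 1).injective_subtype
  rw [Submodule.map_span, Submodule.map_top, Submodule.range_subtype, ← Set.range_comp]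
  exact homogeneousSubmodule_one_eq_span_X.symm

lemma LinForm.lift_coe {A : Type*} [CommSemiring A] [Algebra R A] (L : LinForm σ R →ₗ[R] A)
    (a : LinForm σ R) : lift L a = L a := by
  have h : (lift L).toLinearMap ∘ₗ (homogeneousSubmodule σ R 1).subtype = L :=
    LinearMap.ext_on_range span_range_linForm_X fun i => aeval_X _ i
  exact LinearMap.congr_fun h a

lemma not_isUnit_linForm [Nontrivial R] (a : LinForm σ R) : ¬ IsUnit (a : MvPolynomial σ R) := by
  intro h
  have h0 : constantCoeff (a : MvPolynomial σ R) = 0 := by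
    rw [constantCoeff_eq]
    exact IsHomogeneous.coeff_eq_zero a.2 (by simp)
  exact not_isUnit_zero (h0 ▸ h.map constantCoeff)

lemma not_irreducible_mul [Nontrivial R] (a b : LinForm σ R) :
    ¬ Irreducible (a * b : MvPolynomial σ R) := fun h =>
  (h.isUnit_or_isUnit rfl).elim (not_isUnit_linForm a) (not_isUnit_linForm b)

lemma ne_zero_of_irreducible_mul_add_mul [Nontrivial R] {v₁ v₂ a₁ a₂ : LinForm σ R}
    (h : Irreducible (v₁ * a₁ + v₂ * a₂ : MvPolynomial σ R)) : v₁ ≠ 0 := by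
  rintro rfl
  exact not_irreducible_mul v₂ a₂ (by simpa using h)

lemma notMem_span_of_irreducible_mul_add_mul [Nontrivial R] {v₁ v₂ a₁ a₂ : LinForm σ R}
    (h : Irreducible (v₁ * a₁ + v₂ * a₂ : MvPolynomial σ R)) : v₂ ∉ R ∙ v₁ := by
  intro hv
  obtain ⟨c, rfl⟩ := Submodule.mem_span_singleton.1 hv
  exact not_irreducible_mul v₁ (a₁ + c • a₂) (by convert h using 1; push_cast; algebra)

lemma exists_eq_mul_add_smul_sq [Nontrivial R] {P : MvPolynomial σ R} {v₁ v₂ a₁ a₂ : LinForm σ R}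
    (hP : P = v₁ * a₁ + v₂ * a₂) (hPirr : Irreducible P)
    (ha₂ : a₂ ∈ Submodule.span R {v₁, v₂}) :
    ∃ h k : R, k ≠ 0 ∧ a₂ = h • v₁ + k • v₂ ∧
      P = v₁ * (a₁ + h • v₂ : LinForm σ R) + k • (v₂ * v₂) := by
  obtain ⟨h, k, rfl⟩ := Submodule.mem_span_pair.1 ha₂
  have hP' : P = v₁ * (a₁ + h • v₂ : LinForm σ R) + k • (v₂ * v₂) := by
    rw [hP]
    push_cast
    algebra
  refine ⟨h, k, ?_, rfl, hP'⟩
  rintro rfl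
  rw [zero_smul, add_zero] at hP'
  exact not_irreducible_mul _ _ (hP' ▸ hPirr)

end LinearForms

section LinearIdeals

variable {σ K : Type*} [Field K]

/-- The ideal generated by a space `W` of linear forms, i.e. the ideal of the linear subspace of
affine space on which `W` vanishes. -/
def linIdeal (W : Submodule K (LinForm σ K)) : Ideal (MvPolynomial σ K) :=
  Ideal.span ((↑) '' (W : Set (LinForm σ K)))

lemma coe_mem_linIdeal_of_mem {W : Submodule K (LinForm σ K)} {a : LinForm σ K} (ha : a ∈ W) :
    (a : MvPolynomial σ K) ∈ linIdeal W :=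
  Ideal.subset_span ⟨a, ha, rfl⟩

/-- Killing `W` along a complement exhibits `linIdeal W` as the kernel of an endomorphism of the
polynomial ring. -/
lemma exists_ker_eq_linIdeal (W : Submodule K (LinForm σ K)) :
    ∃ φ : MvPolynomial σ K →ₐ[K] MvPolynomial σ K,
      RingHom.ker φ = linIdeal W ∧ ∀ a : LinForm σ K, φ a = 0 → a ∈ W := by
  obtain ⟨W', hW⟩ := W.exists_isCompl
  let φ := LinForm.lift ((homogeneousSubmodule σ K 1).subtype ∘ₗ W'.projection W hW.symm)
  have φ_coe (a : LinForm σ K) : φ a = (W'.projection W hW.symm a : MvPolynomial σ K) :=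
    LinForm.lift_coe _ a
  have φ_coe_eq_zero (a : LinForm σ K) : φ a = 0 ↔ a ∈ W := by
    rw [φ_coe, Submodule.coe_eq_zero, Submodule.projection_apply_eq_zero_iff]
  refine ⟨φ, le_antisymm (fun p hp => ?_) ?_, fun a => (φ_coe_eq_zero a).1⟩
  · have mk_comp_φ : (Ideal.Quotient.mkₐ K (linIdeal W)).comp φ =
        Ideal.Quotient.mkₐ K (linIdeal W) := by
      refine algHom_ext fun i => ?_
      let x : LinForm σ K := ⟨X i, isHomogeneous_X K i⟩
      have hx : W'.projection W hW.symm x - x ∈ W := by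
        rw [← Submodule.projection_apply_eq_zero_iff hW.symm, map_sub, sub_eq_zero]
        exact Submodule.projection_apply_of_mem_left _ (Submodule.projection_apply_mem _ _)
      exact Ideal.Quotient.eq.2 (φ_coe x ▸ coe_mem_linIdeal_of_mem hx)
    have h := AlgHom.congr_fun mk_comp_φ p
    rw [AlgHom.comp_apply, (RingHom.mem_ker).1 hp, map_zero] at h
    exact Ideal.Quotient.eq_zero_iff_mem.1 h.symm
  · rw [linIdeal, Ideal.span_le]
    rintro _ ⟨a, ha, rfl⟩
    exact (φ_coe_eq_zero a).2 ha

instance linIdeal_isPrime (W : Submodule K (LinForm σ K)) : (linIdeal W).IsPrime := by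
  obtain ⟨φ, hφ, -⟩ := exists_ker_eq_linIdeal W
  exact hφ ▸ RingHom.ker_isPrime φ

lemma coe_mem_linIdeal {W : Submodule K (LinForm σ K)} {a : LinForm σ K} :
    (a : MvPolynomial σ K) ∈ linIdeal W ↔ a ∈ W := by
  obtain ⟨φ, hφ, hW⟩ := exists_ker_eq_linIdeal W
  exact ⟨fun h => hW a ((hφ ▸ h : (a : MvPolynomial σ K) ∈ RingHom.ker φ)),
    coe_mem_linIdeal_of_mem⟩

lemma linIdeal_span (s : Set (LinForm σ K)) :
    linIdeal (Submodule.span K s) = Ideal.span ((↑) '' s) := by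
  refine le_antisymm (Ideal.span_le.2 ?_)
    (Ideal.span_mono (Set.image_mono Submodule.subset_span))
  rw [Set.image_subset_iff]
  suffices h : Submodule.span K s ≤ ((Ideal.span ((↑) '' s)).restrictScalars K).comap
      (homogeneousSubmodule σ K 1).subtype from h
  exact Submodule.span_le.2 fun a ha => Ideal.subset_span ⟨a, ha, rfl⟩

lemma dvd_linForm_iff {v a : LinForm σ K} :
    (v : MvPolynomial σ K) ∣ a ↔ a ∈ K ∙ v := by
  rw [← coe_mem_linIdeal, linIdeal_span, Set.image_singleton, Ideal.mem_span_singleton]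

lemma dvd_of_dvd_linForm_mul {v w : LinForm σ K} (hw : w ∉ K ∙ v) {p : MvPolynomial σ K}
    (h : (v : MvPolynomial σ K) ∣ w * p) : (v : MvPolynomial σ K) ∣ p := by
  rw [← Ideal.mem_span_singleton, ← Set.image_singleton, ← linIdeal_span] at h ⊢
  exact ((linIdeal_isPrime _).mem_or_mem h).resolve_left (coe_mem_linIdeal.not.2 hw)

lemma exists_algHom_apply_eq_zero {W : Submodule K (LinForm σ K)}
    {x : LinForm σ K} (hx : x ∉ W) :
    ∃ φ : MvPolynomial σ K →ₐ[K] MvPolynomial σ K, φ x = 0 ∧ (∀ w ∈ W, φ w = w) ∧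
      ∀ a : MvPolynomial σ K, a.IsHomogeneous 1 → (φ a).IsHomogeneous 1 := by
  obtain ⟨f, hfx, hfW⟩ := Submodule.exists_le_ker_of_notMem hx
  let L : LinForm σ K →ₗ[K] LinForm σ K := LinearMap.id - f.smulRight ((f x)⁻¹ • x)
  let φ := LinForm.lift ((homogeneousSubmodule σ K 1).subtype ∘ₗ L)
  have φ_coe (a : LinForm σ K) : φ a = L a := LinForm.lift_coe _ a
  refine ⟨φ, ?_, fun w hw => ?_, fun a ha => ?_⟩
  · simp [φ_coe, L, smul_inv_smul₀ hfx]
  · simp [φ_coe, L, LinearMap.mem_ker.1 (hfW hw)]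
  · exact φ_coe ⟨a, ha⟩ ▸ (L _).2

end LinearIdeals

section Pencils

variable {σ K : Type*} [Field K]

lemma not_irreducible_binary_quadratic [IsAlgClosed K] (x y : LinForm σ K) (r s t : K) :
    ¬ Irreducible (r • (x * x) + s • (x * y) + t • (y * y) : MvPolynomial σ K) := by
  intro h
  rcases eq_or_ne r 0 with rfl | hr
  · exact not_irreducible_mul y (s • x + t • y) (by convert h using 1; push_cast; algebra)
  · obtain ⟨z, hz⟩ := IsAlgClosed.exists_root
      (Polynomial.C r * Polynomial.X ^ 2 + Polynomial.C s * Polynomial.X + Polynomial.C t)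
      (by rw [Polynomial.degree_quadratic hr]; decide)
    have hz : t = - (r * z ^ 2 + s * z) := by
      simp only [Polynomial.IsRoot.def, Polynomial.eval_add, Polynomial.eval_mul, Polynomial.eval_C,
        Polynomial.eval_pow, Polynomial.eval_X] at hz
      linear_combination hz
    refine not_irreducible_mul (x - z • y) (r • x + (s + r * z) • y) ?_
    convert h using 1
    push_cast
    rw [hz]
    algebra

lemma mem_of_mem_radical_span_pair {R : Type*} [CommRing R] {I : Ideal R} [hI : I.IsPrime]
    {P Q T : R} (hP : P ∈ I) (hQ : Q ∈ I) (hT : T ∈ (Ideal.span {P, Q}).radical) : T ∈ I :=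
  hI.radical_le_iff.2 (Ideal.span_le.2 (Set.pair_subset hP hQ)) hT

lemma mul_add_mul_mem_linIdeal {W : Submodule K (LinForm σ K)} {v₁ v₂ : LinForm σ K}
    (h₁ : v₁ ∈ W) (h₂ : v₂ ∈ W) (p₁ p₂ : MvPolynomial σ K) : v₁ * p₁ + v₂ * p₂ ∈ linIdeal W :=
  add_mem (Ideal.mul_mem_right _ _ (coe_mem_linIdeal_of_mem h₁))
    (Ideal.mul_mem_right _ _ (coe_mem_linIdeal_of_mem h₂))

lemma not_dvd_linForm {R : Type*} [CommRing R] [IsDomain R] {Q : MvPolynomial σ R}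
    (hQ2 : Q.IsHomogeneous 2) {v : LinForm σ R} (hv : v ≠ 0) : ¬ Q ∣ v := by
  intro h
  have hv' : (v : MvPolynomial σ R) ≠ 0 := by simpa using hv
  have hle := totalDegree_le_of_dvd_of_isDomain h hv'
  rw [hQ2.totalDegree (ne_zero_of_dvd_ne_zero hv' h), IsHomogeneous.totalDegree v.2 hv'] at hle
  omega

/-- A functional `f` on linear forms that isolates `a₁` in the pair of quadratics
`P = v₁ a₁ + v₂ a₂`, `Q = v₁ b₁ + v₂ b₂`: in the direction dual to `f`, the derivative of `P` is
`v₁` and that of `Q` vanishes. -/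
structure Isolates (f : Module.Dual K (LinForm σ K)) (v₁ v₂ a₁ a₂ b₁ b₂ : LinForm σ K) :
    Prop where
  map_v₁ : f v₁ = 0
  map_v₂ : f v₂ = 0
  map_a₁ : f a₁ = 1
  map_a₂ : f a₂ = 0
  map_b₁ : f b₁ = 0
  map_b₂ : f b₂ = 0

variable {v₁ v₂ a₁ a₂ b₁ b₂ t₁ t₂ : LinForm σ K} {P Q T : MvPolynomial σ K}
  {f : Module.Dual K (LinForm σ K)}

/-- Solving `P = 0` for the isolated variable amounts to the substitution `a ↦ v₁ a - f(a) P`,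
under which `P ↦ 0`, `Q ↦ v₁² Q` and `T` becomes `v₁` times the dividend. -/
lemma Isolates.dvd_of_mem_radical (hf : Isolates f v₁ v₂ a₁ a₂ b₁ b₂)
    (hP : P = v₁ * a₁ + v₂ * a₂) (hQ : Q = v₁ * b₁ + v₂ * b₂) (hT : T = v₁ * t₁ + v₂ * t₂)
    (hQprime : Prime Q) (hQv : ¬ Q ∣ v₁) (hrad : T ∈ (Ideal.span {P, Q}).radical) :
    Q ∣ v₁ * (T - f t₁ • P) - f t₂ • (v₂ * P) := by
  let E := LinForm.lift (LinearMap.mulLeft K (v₁ : MvPolynomial σ K) ∘ₗ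
    (homogeneousSubmodule σ K 1).subtype - f.smulRight P)
  have E_coe (a : LinForm σ K) : E a = v₁ * a - f a • P := LinForm.lift_coe _ a
  have E_P : E P = 0 := by
    conv_lhs => rw [hP]
    simp only [map_add, map_mul, E_coe, hf.map_v₁, hf.map_v₂, hf.map_a₁, hf.map_a₂]
    rw [hP]
    algebra
  have E_Q : E Q = v₁ ^ 2 * Q := by
    conv_lhs => rw [hQ]
    simp only [map_add, map_mul, E_coe, hf.map_v₁, hf.map_v₂, hf.map_b₁, hf.map_b₂]
    rw [hQ]
    algebra
  have E_T : E T = v₁ * (v₁ * (T - f t₁ • P) - f t₂ • (v₂ * P)) := by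
    conv_lhs => rw [hT]
    simp only [map_add, map_mul, E_coe, hf.map_v₁, hf.map_v₂]
    rw [hT]
    algebra
  have : (Ideal.span {Q}).IsPrime := (Ideal.span_singleton_prime hQprime.ne_zero).2 hQprime
  have hET : Q ∣ E T := by
    rw [← Ideal.mem_span_singleton, ← Ideal.mem_comap]
    refine mem_of_mem_radical_span_pair ?_ ?_ hrad
    · simp [E_P]
    · rw [Ideal.mem_comap, Ideal.mem_span_singleton, E_Q]
      exact dvd_mul_left _ _
  exact (hQprime.dvd_or_dvd (E_T ▸ hET)).resolve_left hQv

lemma Isolates.exists_syzygy (hf : Isolates f v₁ v₂ a₁ a₂ b₁ b₂)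
    (hP : P = v₁ * a₁ + v₂ * a₂) (hQ : Q = v₁ * b₁ + v₂ * b₂) (hT : T = v₁ * t₁ + v₂ * t₂)
    (hPirr : Irreducible P) (hQirr : Irreducible Q) (hrad : T ∈ (Ideal.span {P, Q}).radical) :
    ∃ m : LinForm σ K, v₁ * (T - f t₁ • P) = f t₂ • (v₂ * P) + m * Q := by
  have hP2 : P.IsHomogeneous 2 := hP ▸ isHomogeneous_two_mul_add_mul v₁ v₂ a₁ a₂
  have hQ2 : Q.IsHomogeneous 2 := hQ ▸ isHomogeneous_two_mul_add_mul v₁ v₂ b₁ b₂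
  have hT2 : T.IsHomogeneous 2 := hT ▸ isHomogeneous_two_mul_add_mul v₁ v₂ t₁ t₂
  have hdvd := hf.dvd_of_mem_radical hP hQ hT hQirr.prime
    (not_dvd_linForm hQ2 (ne_zero_of_irreducible_mul_add_mul (hP ▸ hPirr))) hrad
  have hhom : (v₁ * (T - f t₁ • P) - f t₂ • (v₂ * P)).IsHomogeneous (1 + 2) := by
    simp only [smul_eq_C_mul]
    exact (IsHomogeneous.mul v₁.2 (hT2.sub (hP2.C_mul _))).sub
      ((IsHomogeneous.mul v₂.2 hP2).C_mul _)
  obtain ⟨m, hm, hmQ⟩ := exists_isHomogeneous_mul_of_dvd hQ2 hhom hdvd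
  exact ⟨⟨m, hm⟩, by linear_combination hmQ⟩

lemma syzygy_coeff_ne_zero {p q : K} {m : LinForm σ K} (hP2 : P.IsHomogeneous 2)
    (hQ2 : Q.IsHomogeneous 2) (hT2 : T.IsHomogeneous 2) (hQ : Prime Q) (hv₁ : v₁ ≠ 0)
    (hTspan : T ∉ Submodule.span K {P, Q}) (hsyz : v₁ * (T - p • P) = q • (v₂ * P) + m * Q) :
    q ≠ 0 := by
  rintro rfl
  have hQT : Q ∣ T - p • P :=
    (hQ.dvd_or_dvd ⟨m, by linear_combination (norm := algebra) hsyz⟩).resolve_left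
      (not_dvd_linForm hQ2 hv₁)
  obtain ⟨c, hc⟩ :=
    exists_smul_of_dvd hQ2 (hT2.sub (smul_eq_C_mul P p ▸ hP2.C_mul p)) hQT
  exact hTspan (Submodule.mem_span_pair.2 ⟨p, c, by linear_combination -hc⟩)

lemma Isolates.mem_span_of_mem_radical (hf : Isolates f v₁ v₂ a₁ a₂ b₁ b₂)
    (hP : P = v₁ * a₁ + v₂ * a₂) (hQ : Q = v₁ * b₁ + v₂ * b₂) (hT : T = v₁ * t₁ + v₂ * t₂)
    (hrad : T ∈ (Ideal.span {P, Q}).radical) (ht₂ : f t₂ ≠ 0) :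
    v₂ ∈ Submodule.span K {v₁, a₂, b₂} := by
  set W := Submodule.span K {v₁, a₂, b₂}
  have hv₁W : v₁ ∈ W := Submodule.subset_span (by simp)
  have hPW : P ∈ linIdeal W := by
    rw [hP, mul_comm (v₂ : MvPolynomial σ K)]
    exact mul_add_mul_mem_linIdeal hv₁W (Submodule.subset_span (by simp)) _ _
  have hQW : Q ∈ linIdeal W := by
    rw [hQ, mul_comm (v₂ : MvPolynomial σ K)]
    exact mul_add_mul_mem_linIdeal hv₁W (Submodule.subset_span (by simp)) _ _
  have hTW : (v₁ * t₁ + v₂ * t₂ : MvPolynomial σ K) ∈ linIdeal W :=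
    hT ▸ mem_of_mem_radical_span_pair hPW hQW hrad
  have hv₂t₂ : (v₂ * t₂ : MvPolynomial σ K) ∈ linIdeal W :=
    ((linIdeal W).add_mem_iff_right
      (Ideal.mul_mem_right _ _ (coe_mem_linIdeal_of_mem hv₁W))).1 hTW
  have ht₂W : t₂ ∉ W := by
    have hW : W ≤ LinearMap.ker f := by
      rw [Submodule.span_le]
      rintro _ (rfl | rfl | rfl)
      exacts [hf.map_v₁, hf.map_a₂, hf.map_b₂]
    exact fun h => ht₂ (hW h)
  exact coe_mem_linIdeal.1 <|
    ((linIdeal_isPrime W).mem_or_mem hv₂t₂).resolve_right (coe_mem_linIdeal.not.2 ht₂W)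

/-- Modulo `v₁` the syzygy reads `v₂ (q v₂ a₂ + m b₂) = 0`. -/
lemma mem_span_pair_of_syzygy {p q : K} {m : LinForm σ K} (hP : P = v₁ * a₁ + v₂ * a₂)
    (hQ : Q = v₁ * b₁ + v₂ * b₂) (hv : v₂ ∉ K ∙ v₁) (hq : q ≠ 0)
    (hv₂ : v₂ ∈ Submodule.span K {v₁, a₂, b₂})
    (hsyz : v₁ * (T - p • P) = q • (v₂ * P) + m * Q) : b₂ ∈ Submodule.span K {v₁, v₂} := by
  obtain ⟨w, hw⟩ : (v₁ : MvPolynomial σ K) ∣ q • (v₂ * a₂) + m * b₂ := by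
    refine dvd_of_dvd_linForm_mul hv ⟨T - p • P - q • (v₂ * a₁) - m * b₁, ?_⟩
    rw [hQ] at hsyz
    nth_rewrite 2 [hP] at hsyz
    linear_combination (norm := algebra) -hsyz
  set V := Submodule.span K {v₁, v₂}
  have hmb₂ : (m * b₂ : MvPolynomial σ K) ∈ linIdeal V := by
    have h : (m * b₂ : MvPolynomial σ K) = v₁ * w + v₂ * -(q • a₂) := by
      linear_combination (norm := algebra) hw
    exact h ▸ mul_add_mul_mem_linIdeal (Submodule.subset_span (by simp))
      (Submodule.subset_span (by simp)) _ _
  refine ((linIdeal_isPrime V).mem_or_mem hmb₂).elim (fun hm => ?_) coe_mem_linIdeal.1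
  obtain ⟨g, e, rfl⟩ := Submodule.mem_span_pair.1 (coe_mem_linIdeal.1 hm)
  obtain ⟨c, hc⟩ : ∃ c : K, c • v₁ = q • a₂ + e • b₂ := by
    rw [← Submodule.mem_span_singleton, ← dvd_linForm_iff]
    refine dvd_of_dvd_linForm_mul hv ⟨w - g • b₂, ?_⟩
    push_cast at hw ⊢
    linear_combination (norm := algebra) hw
  have ha₂ : a₂ ∈ Submodule.span K {b₂, v₁} := by
    refine Submodule.mem_span_pair.2 ⟨-(q⁻¹ * e), q⁻¹ * c, ?_⟩
    rw [mul_smul, hc, smul_add, inv_smul_smul₀ hq]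
    module
  have hv₂' : v₂ ∈ Submodule.span K {b₂, v₁} := by
    refine Submodule.span_le.2 ?_ hv₂
    rintro _ (rfl | rfl | rfl)
    exacts [Submodule.subset_span (by simp), ha₂, Submodule.subset_span (by simp)]
  have hb₂ : b₂ ∈ Submodule.span K {v₂, v₁} := mem_span_insert_exchange hv₂' hv
  rwa [Set.pair_comm] at hb₂

lemma exists_smul_eq_of_syzygy {p q r : K} {m u : LinForm σ K} (hP : P = v₁ * a₁ + v₂ * a₂)
    (hQ : Q = v₁ * u + r • (v₂ * v₂)) (hv₁ : v₁ ≠ 0) (hv : v₂ ∉ K ∙ v₁)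
    (hsyz : v₁ * (T - p • P) = q • (v₂ * P) + m * Q) :
    ∃ g : K, r • (T - p • P) = q • (r • (v₂ * a₁) - a₂ * u) + g • Q := by
  obtain ⟨g, hg⟩ : ∃ g : K, g • v₁ = q • a₂ + r • m := by
    rw [← Submodule.mem_span_singleton, ← dvd_linForm_iff]
    refine dvd_of_dvd_linForm_mul hv (dvd_of_dvd_linForm_mul hv
      ⟨T - p • P - q • (v₂ * a₁) - m * u, ?_⟩)
    push_cast
    rw [hQ] at hsyz
    nth_rewrite 2 [hP] at hsyz
    linear_combination (norm := algebra) -hsyz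
  replace hg := congrArg (Subtype.val) hg
  push_cast at hg
  refine ⟨g, mul_left_cancel₀ (a := (v₁ : MvPolynomial σ K)) (by simpa using hv₁) ?_⟩
  nth_rewrite 2 [hP] at hsyz
  linear_combination (norm := algebra) r • hsyz - Q * hg - (q • (a₂ : MvPolynomial σ K)) * hQ

lemma mem_span_pair_of_smul_eq [IsAlgClosed K] {p q r g : K} {u : LinForm σ K}
    (hP : P = v₁ * a₁ + v₂ * a₂) (hQ : Q = v₁ * u + r • (v₂ * v₂)) (hT : T = v₁ * t₁ + v₂ * t₂)
    (hQirr : Irreducible Q) (hq : q ≠ 0)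
    (hTeq : r • (T - p • P) = q • (r • (v₂ * a₁) - a₂ * u) + g • Q) :
    a₂ ∈ Submodule.span K {v₁, v₂} := by
  set V := Submodule.span K {v₁, v₂}
  have ha₂u : (a₂ * u : MvPolynomial σ K) ∈ linIdeal V := by
    have h : q • (a₂ * u : MvPolynomial σ K) =
        v₁ * (g • u + (r * p) • a₁ - r • t₁) +
          v₂ * ((q * r) • a₁ + (g * r) • v₂ + (r * p) • a₂ - r • t₂) := by
      rw [hP, hQ, hT] at hTeq
      linear_combination (norm := algebra) hTeq
    rw [← inv_smul_smul₀ hq (a₂ * u : MvPolynomial σ K), h]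
    exact Submodule.smul_of_tower_mem _ _ (mul_add_mul_mem_linIdeal
      (Submodule.subset_span (by simp)) (Submodule.subset_span (by simp)) _ _)
  refine coe_mem_linIdeal.1 (((linIdeal_isPrime V).mem_or_mem ha₂u).resolve_right fun hu => ?_)
  obtain ⟨s, t, rfl⟩ := Submodule.mem_span_pair.1 (coe_mem_linIdeal.1 hu)
  refine not_irreducible_binary_quadratic v₁ v₂ s t r ?_
  convert hQirr using 1
  rw [hQ]
  push_cast
  algebra

/-- The simultaneous shape of `P`, `Q` and `T` relative to `v₁`, `v₂`, up to nonzero scalars: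
`P = v₁ ℓ + v₂²`, `Q = v₁ u - v₂²` and `T = v₂ (ℓ + u)` modulo the span of `P` and `Q`. -/
def HasNormalForm (P Q T v₁ v₂ : MvPolynomial σ K) : Prop :=
  ∃ ℓ u : MvPolynomial σ K, ℓ.IsHomogeneous 1 ∧ u.IsHomogeneous 1 ∧
    ∃ α β c₁ c₂ c₃ : K, c₁ ≠ 0 ∧ c₂ ≠ 0 ∧ c₃ ≠ 0 ∧
      c₁ • P = v₁ * ℓ + v₂ ^ 2 ∧
      c₂ • Q = v₁ * u - v₂ ^ 2 ∧
      c₃ • T = v₂ * (ℓ + u) + α • P + β • Q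

lemma hasNormalForm_of_smul_eq {p q k r g : K} {ℓ u : LinForm σ K} (hk : k ≠ 0) (hr : r ≠ 0)
    (hq : q ≠ 0) (hP : P = v₁ * ℓ + k • (v₂ * v₂)) (hQ : Q = v₁ * u + r • (v₂ * v₂))
    (hTeq : r • (T - p • P) = q • (v₂ * (r • ℓ - k • u)) + g • Q) :
    HasNormalForm P Q T v₁ v₂ := by
  have hc : (q * k * r)⁻¹ ≠ 0 := by positivity
  refine ⟨_, _, (k⁻¹ • ℓ).2, (-r⁻¹ • u).2, (q * k * r)⁻¹ * (r * p), (q * k * r)⁻¹ * g,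
    k⁻¹, -r⁻¹, (q * k * r)⁻¹ * r, inv_ne_zero hk, neg_ne_zero.2 (inv_ne_zero hr),
    mul_ne_zero hc hr, ?_, ?_, ?_⟩
  · rw [hP, smul_add, inv_smul_smul₀ hk]
    push_cast
    algebra
  · rw [hQ, smul_add, neg_smul _ (r • _ : MvPolynomial σ K), inv_smul_smul₀ hr]
    push_cast
    algebra
  · have hℓ : k⁻¹ = (q * k * r)⁻¹ * q * r := by field_simp
    have hu : r⁻¹ = (q * k * r)⁻¹ * q * k := by field_simp
    rw [hℓ, hu]
    push_cast
    linear_combination (norm := algebra) (q * k * r)⁻¹ • hTeq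

lemma Isolates.hasNormalForm [IsAlgClosed K] (hf : Isolates f v₁ v₂ a₁ a₂ b₁ b₂)
    (hP : P = v₁ * a₁ + v₂ * a₂) (hQ : Q = v₁ * b₁ + v₂ * b₂) (hT : T = v₁ * t₁ + v₂ * t₂)
    (hPirr : Irreducible P) (hQirr : Irreducible Q) (hrad : T ∈ (Ideal.span {P, Q}).radical)
    (hTspan : T ∉ Submodule.span K {P, Q}) : HasNormalForm P Q T v₁ v₂ := by
  have hP2 : P.IsHomogeneous 2 := hP ▸ isHomogeneous_two_mul_add_mul v₁ v₂ a₁ a₂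
  have hQ2 : Q.IsHomogeneous 2 := hQ ▸ isHomogeneous_two_mul_add_mul v₁ v₂ b₁ b₂
  have hT2 : T.IsHomogeneous 2 := hT ▸ isHomogeneous_two_mul_add_mul v₁ v₂ t₁ t₂
  have hv₁ : v₁ ≠ 0 := ne_zero_of_irreducible_mul_add_mul (hP ▸ hPirr)
  have hv : v₂ ∉ K ∙ v₁ := notMem_span_of_irreducible_mul_add_mul (hP ▸ hPirr)
  obtain ⟨m, hsyz⟩ := hf.exists_syzygy hP hQ hT hPirr hQirr hrad
  have hq : f t₂ ≠ 0 := syzygy_coeff_ne_zero hP2 hQ2 hT2 hQirr.prime hv₁ hTspan hsyz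
  have hb₂ : b₂ ∈ Submodule.span K {v₁, v₂} :=
    mem_span_pair_of_syzygy hP hQ hv hq (hf.mem_span_of_mem_radical hP hQ hT hrad hq) hsyz
  obtain ⟨s, r, hr, -, hQ'⟩ := exists_eq_mul_add_smul_sq hQ hQirr hb₂
  obtain ⟨g, hTeq⟩ := exists_smul_eq_of_syzygy hP hQ' hv₁ hv hsyz
  have ha₂ : a₂ ∈ Submodule.span K {v₁, v₂} :=
    mem_span_pair_of_smul_eq hP hQ' hT hQirr hq hTeq
  obtain ⟨h, k, hk, rfl, hP'⟩ := exists_eq_mul_add_smul_sq hP hPirr ha₂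
  refine hasNormalForm_of_smul_eq (p := f t₁) (g := g - f t₂ * h) hk hr hq hP' hQ' ?_
  push_cast at hTeq hQ' ⊢
  linear_combination (norm := algebra) hTeq + (f t₂ * h) • hQ'

/-- The shear `v₁ ↦ v₁ + c v₂` makes a functional that kills `v₁`, `v₂`, `b₁`, `b₂` but not `a₁`
isolate a multiple of `a₁`. -/
lemma exists_hasNormalForm_of_notMem [IsAlgClosed K] (hP : P = v₁ * a₁ + v₂ * a₂)
    (hQ : Q = v₁ * b₁ + v₂ * b₂) (hT : T = v₁ * t₁ + v₂ * t₂) (hPirr : Irreducible P)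
    (hQirr : Irreducible Q) (hrad : T ∈ (Ideal.span {P, Q}).radical)
    (hTspan : T ∉ Submodule.span K {P, Q}) (ha₁ : a₁ ∉ Submodule.span K {v₁, v₂, b₁, b₂}) :
    ∃ c : K, HasNormalForm P Q T (v₁ + c • v₂ : LinForm σ K) v₂ := by
  obtain ⟨f, hfa₁, hfker⟩ := Submodule.exists_le_ker_of_notMem ha₁
  have hf₀ {x : LinForm σ K} (hx : x ∈ ({v₁, v₂, b₁, b₂} : Set (LinForm σ K))) : f x = 0 :=
    hfker (Submodule.subset_span hx)
  have hf_v₁ : f v₁ = 0 := hf₀ (by simp)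
  have hf_v₂ : f v₂ = 0 := hf₀ (by simp)
  have hf_b₁ : f b₁ = 0 := hf₀ (by simp)
  have hf_b₂ : f b₂ = 0 := hf₀ (by simp)
  set c : K := f a₂ / f a₁
  have hf : Isolates ((f a₁)⁻¹ • f) (v₁ + c • v₂) v₂ a₁ (a₂ - c • a₁) b₁ (b₂ - c • b₁) := by
    constructor <;> simp [hf_v₁, hf_v₂, hf_b₁, hf_b₂, hfa₁, c]
  have shear {p : MvPolynomial σ K} {x y : LinForm σ K} (hp : p = v₁ * x + v₂ * y) :
      p = (v₁ + c • v₂ : LinForm σ K) * x + v₂ * (y - c • x : LinForm σ K) := by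
    rw [hp]
    push_cast
    algebra
  exact ⟨c, hf.hasNormalForm (shear hP) (shear hQ) (shear hT) hPirr hQirr hrad hTspan⟩

end Pencils

section MinimalSpace

variable {σ : Type*} {P Q : MvPolynomial σ ℂ}

lemma HasRep.pred_of_eq_zero {r : ℕ} {a b : Fin r → MvPolynomial σ ℂ} (ha : ∀ i, IsLinForm (a i))
    (hb : ∀ i, IsLinForm (b i)) {i : Fin r} (hi : a i = 0) :
    HasRep (∑ j, a j * b j) (r - 1) := by
  obtain ⟨r, rfl⟩ := Nat.exists_eq_succ_of_ne_zero (NeZero.of_pos i.pos).out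
  refine ⟨a ∘ i.succAbove, b ∘ i.succAbove, fun _ => ha _, fun _ => hb _, ?_⟩
  simp [Fin.sum_univ_succAbove _ i, hi]

/-- Killing a form `a i` outside `W` fixes `P` and would shorten the minimal representation. -/
lemma mem_of_minimal_rep {W : Submodule ℂ (LinForm σ ℂ)}
    (hPW : P ∈ quadOn (W.map (homogeneousSubmodule σ ℂ 1).subtype))
    {a b : Fin (rankS P) → MvPolynomial σ ℂ} (ha : ∀ i, IsLinForm (a i))
    (hb : ∀ i, IsLinForm (b i)) (hP : P = ∑ i, a i * b i) (i : Fin (rankS P)) :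
    a i ∈ W.map (homogeneousSubmodule σ ℂ 1).subtype := by
  by_contra hi
  have hx : (⟨a i, ha i⟩ : LinForm σ ℂ) ∉ W := fun h => hi ⟨_, h, rfl⟩
  obtain ⟨φ, hφ_i, hφW, hφ_hom⟩ := exists_algHom_apply_eq_zero hx
  have φ_P : φ P = P := by
    suffices h : quadOn (W.map (homogeneousSubmodule σ ℂ 1).subtype) ≤
        LinearMap.eqLocus φ.toLinearMap LinearMap.id from h hPW
    rw [quadOn, Submodule.span_le]
    rintro _ ⟨_, ⟨v, hv, rfl⟩, _, ⟨w, hw, rfl⟩, rfl⟩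
    simp [hφW v hv, hφW w hw]
  have hshort : HasRep P (rankS P - 1) := by
    have h := HasRep.pred_of_eq_zero (fun j => hφ_hom _ (ha j)) (fun j => hφ_hom _ (hb j)) hφ_i
    simpa only [← map_mul, ← map_sum, ← hP, φ_P] using h
  have hle : rankS P ≤ rankS P - 1 := Nat.sInf_le hshort
  have := i.pos
  omega

lemma MS_le_of_mem_quadOn {W : Submodule ℂ (LinForm σ ℂ)}
    (hPW : P ∈ quadOn (W.map (homogeneousSubmodule σ ℂ 1).subtype)) :
    MS P ≤ W.map (homogeneousSubmodule σ ℂ 1).subtype := by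
  refine iSup_le ?_
  rintro ⟨⟨a, b⟩, ha, hb, hP⟩
  rw [Submodule.span_le, Set.union_subset_iff]
  refine ⟨Set.range_subset_iff.2 (mem_of_minimal_rep hPW ha hb hP),
    Set.range_subset_iff.2 (mem_of_minimal_rep hPW hb ha ?_)⟩
  simpa only [mul_comm] using hP

lemma span_le_MS {r : ℕ} {a b : Fin r → MvPolynomial σ ℂ} (ha : ∀ i, IsLinForm (a i))
    (hb : ∀ i, IsLinForm (b i)) (hQ : Q = ∑ i, a i * b i) (hr : rankS Q = r) :
    Submodule.span ℂ (Set.range a ∪ Set.range b) ≤ MS Q := by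
  subst hr
  exact le_iSup_of_le ⟨(a, b), ha, hb, hQ⟩ le_rfl

variable {v₁ v₂ a₁ a₂ b₁ b₂ : LinForm σ ℂ}

lemma rankS_eq_two_of_irreducible (hQ : Q = v₁ * b₁ + v₂ * b₂) (hQirr : Irreducible Q) :
    rankS Q = 2 := by
  have hrep : HasRep Q 2 := ⟨![v₁, v₂], ![b₁, b₂], Fin.forall_fin_two.2 ⟨v₁.2, v₂.2⟩,
    Fin.forall_fin_two.2 ⟨b₁.2, b₂.2⟩, by simpa using hQ⟩
  refine le_antisymm (Nat.sInf_le hrep) (le_csInf ⟨2, hrep⟩ fun r hr => ?_)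
  obtain ⟨a, b, ha, hb, hab⟩ := hr
  by_contra! hr
  interval_cases r
  · exact hQirr.ne_zero (by simpa using hab)
  · exact not_irreducible_mul ⟨a 0, ha 0⟩ ⟨b 0, hb 0⟩ (by simpa [hab] using hQirr)

lemma MS_le_MS_of_mem_span (hP : P = v₁ * a₁ + v₂ * a₂) (hQ : Q = v₁ * b₁ + v₂ * b₂)
    (hQirr : Irreducible Q)
    (ha₁ : a₁ ∈ Submodule.span ℂ {v₁, v₂, b₁, b₂})
    (ha₂ : a₂ ∈ Submodule.span ℂ {v₁, v₂, b₁, b₂}) : MS P ≤ MS Q := by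
  set W := Submodule.span ℂ {v₁, v₂, b₁, b₂}
  have hv₁ : v₁ ∈ W := Submodule.subset_span (by simp)
  have hv₂ : v₂ ∈ W := Submodule.subset_span (by simp)
  have hPW : P ∈ quadOn (W.map (homogeneousSubmodule σ ℂ 1).subtype) := hP ▸ add_mem
    (Submodule.subset_span ⟨_, ⟨v₁, hv₁, rfl⟩, _, ⟨a₁, ha₁, rfl⟩, rfl⟩)
    (Submodule.subset_span ⟨_, ⟨v₂, hv₂, rfl⟩, _, ⟨a₂, ha₂, rfl⟩, rfl⟩)
  have hWQ : W.map (homogeneousSubmodule σ ℂ 1).subtype ≤ MS Q := by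
    refine le_trans ?_ (span_le_MS (a := ![(v₁ : MvPolynomial σ ℂ), v₂]) (b := ![↑b₁, ↑b₂])
      (Fin.forall_fin_two.2 ⟨v₁.2, v₂.2⟩) (Fin.forall_fin_two.2 ⟨b₁.2, b₂.2⟩)
      (by simpa using hQ) (rankS_eq_two_of_irreducible hQ hQirr))
    rw [Submodule.map_span]
    exact Submodule.span_mono (by simp [Set.image_insert_eq, Set.insert_subset_iff])
  exact (MS_le_of_mem_quadOn hPW).trans hWQ

end MinimalSpace

theorem stmt_12_general {σ : Type*} (P Q T v₁ v₂ : MvPolynomial σ ℂ)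
    (hP2 : P.IsHomogeneous 2) (hQ2 : Q.IsHomogeneous 2) (hT2 : T.IsHomogeneous 2)
    (hPirr : Irreducible P) (hQirr : Irreducible Q)
    (hrad : T ∈ (Ideal.span {P, Q}).radical)
    (hv₁ : IsLinForm v₁) (hv₂ : IsLinForm v₂)
    (hPv : P ∈ Ideal.span {v₁, v₂}) (hQv : Q ∈ Ideal.span {v₁, v₂})
    (hTspan : T ∉ Submodule.span ℂ {P, Q}) (hMS : ¬ MS P ≤ MS Q) :
    ∃ v₁' v₂' : MvPolynomial σ ℂ, v₁' ∈ Submodule.span ℂ {v₁, v₂} ∧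
      v₂' ∈ Submodule.span ℂ {v₁, v₂} ∧ HasNormalForm P Q T v₁' v₂' := by
  lift v₁ to LinForm σ ℂ using hv₁
  lift v₂ to LinForm σ ℂ using hv₂
  have : (Ideal.span {(v₁ : MvPolynomial σ ℂ), ↑v₂}).IsPrime := by
    rw [← Set.image_pair, ← linIdeal_span]
    infer_instance
  have hTv : T ∈ Ideal.span {(v₁ : MvPolynomial σ ℂ), ↑v₂} :=
    mem_of_mem_radical_span_pair hPv hQv hrad
  obtain ⟨a₁, a₂, hP⟩ := exists_linForm_of_mem_span_pair hP2 hPv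
  obtain ⟨b₁, b₂, hQ⟩ := exists_linForm_of_mem_span_pair hQ2 hQv
  obtain ⟨t₁, t₂, hT⟩ := exists_linForm_of_mem_span_pair hT2 hTv
  by_cases ha₁ : a₁ ∈ Submodule.span ℂ {v₁, v₂, b₁, b₂}
  · have ha₂ : a₂ ∉ Submodule.span ℂ {v₂, v₁, b₂, b₁} := by
      rw [Set.insert_comm v₂ v₁, Set.pair_comm b₂ b₁]
      exact fun ha₂ => hMS (MS_le_MS_of_mem_span hP hQ hQirr ha₁ ha₂)
    rw [add_comm] at hP hQ hT
    obtain ⟨c, hc⟩ :=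
      exists_hasNormalForm_of_notMem hP hQ hT hPirr hQirr hrad hTspan ha₂
    exact ⟨_, _, Submodule.mem_span_pair.2 ⟨c, 1, by push_cast; module⟩,
      Submodule.subset_span (by simp), hc⟩
  · obtain ⟨c, hc⟩ :=
      exists_hasNormalForm_of_notMem hP hQ hT hPirr hQirr hrad hTspan ha₁
    exact ⟨_, _, Submodule.mem_span_pair.2 ⟨1, c, by push_cast; module⟩,
      Submodule.subset_span (by simp), hc⟩

/-- strengthening of case (iii): under the stated hypotheses there are
linear forms `v₁', v₂' ∈ span{v₁,v₂}` and `ℓ, u` such that, up to nonzero constants,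
`P = v₁'ℓ + v₂'²`, `Q = v₁'u − v₂'²` and `T = v₂'(ℓ+u) + αP + βQ`. -/
theorem stmt_12 {n : ℕ} (P Q T v₁ v₂ : MvPolynomial (Fin n) ℂ)
    (hP2 : P.IsHomogeneous 2) (hQ2 : Q.IsHomogeneous 2) (hT2 : T.IsHomogeneous 2)
    (hPirr : Irreducible P) (hQirr : Irreducible Q) (hTirr : Irreducible T)
    (hrad : T ∈ (Ideal.span {P, Q}).radical)
    (hv₁ : IsLinForm v₁) (hv₂ : IsLinForm v₂)
    (hPv : P ∈ Ideal.span ({v₁, v₂} : Set (MvPolynomial (Fin n) ℂ)))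
    (hQv : Q ∈ Ideal.span ({v₁, v₂} : Set (MvPolynomial (Fin n) ℂ)))
    (hTv : T ∈ Ideal.span ({v₁, v₂} : Set (MvPolynomial (Fin n) ℂ)))
    (hTspan : T ∉ Submodule.span ℂ ({P, Q} : Set (MvPolynomial (Fin n) ℂ)))
    (hnosq : ¬ ∃ (α β : ℂ) (ℓ : MvPolynomial (Fin n) ℂ),
      (α, β) ≠ (0, 0) ∧ IsLinForm ℓ ∧ α • P + β • Q = ℓ ^ 2)
    (hMS : ¬ MS P ≤ MS Q) :
    ∃ v₁' v₂' : MvPolynomial (Fin n) ℂ,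
      v₁' ∈ Submodule.span ℂ ({v₁, v₂} : Set (MvPolynomial (Fin n) ℂ)) ∧
      v₂' ∈ Submodule.span ℂ ({v₁, v₂} : Set (MvPolynomial (Fin n) ℂ)) ∧
      ∃ ℓ u : MvPolynomial (Fin n) ℂ, IsLinForm ℓ ∧ IsLinForm u ∧
      ∃ (α β c₁ c₂ c₃ : ℂ), c₁ ≠ 0 ∧ c₂ ≠ 0 ∧ c₃ ≠ 0 ∧
        c₁ • P = v₁' * ℓ + v₂' ^ 2 ∧
        c₂ • Q = v₁' * u - v₂' ^ 2 ∧
        c₃ • T = v₂' * (ℓ + u) + α • P + β • Q :=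
  stmt_12_general P Q T v₁ v₂ hP2 hQ2 hT2 hPirr hQirr hrad hv₁ hv₂ hPv hQv hTspan hMS
end
end

section
/- Let 0 < δ ≤ 1, let W ⊂ C^n be an r-dimensional subspace, let 𝒲 ⊂ W and 𝒦 ⊂ C^n \ W be finite sets such that no two vectors in 𝒯 = 𝒦 ∪ 𝒲 are linearly dependent. Suppose every p ∈ 𝒦 satisfies: for at least a δ fraction of the points q ∈ 𝒯, the span of p and q contains a point of 𝒯 \ {p, q}. Then dim(span(𝒯)) ≤ O(r + 1/δ), i.e., there is a universal constant C such that dim(span(𝒯)) ≤ C(r + 1/δ). -/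
/-!
Give each collinear triple on a line with `ℓ` points of `𝒯` the weight `1 / (ℓ - 2)`. Any two points
then lie in triples of total weight at most one, while a point outside `W` lies in triples of total
weight at least `δ |𝒯| / 2`. Modulo `W` the points of `W` vanish, and every remaining point of a
triple gives a linear relation supported on that triple, so the relations form a weighted design
matrix that annihilates the dual of `span 𝒯 / W`.

Its columns can be scaled, by almost minimizing a convex potential, so that with rows normalized the
weighted columns have norm close to one; the bound on pairs makes the Gram matrix close to the
identity in Frobenius norm, and this distance bounds the dimension of the kernel. The outcome is
`dim (span 𝒯 / W) ≤ 6 / δ`.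
-/

open Finset Matrix Module Submodule
open scoped ComplexConjugate

section Scaling

theorem exists_norm_gradient_le_of_bddBelow {F : Type*} [NormedAddCommGroup F]
    [InnerProductSpace ℝ F] [FiniteDimensional ℝ F] {f : F → ℝ} {f' : F → F}
    (hf : ∀ x, HasGradientAt f (f' x) x) (hbdd : BddBelow (Set.range f)) {ε : ℝ} (hε : 0 < ε) :
    ∃ x, ‖f' x‖ ≤ ε := by
  obtain ⟨m, hm⟩ := hbdd
  replace hm (x : F) : m ≤ f x := hm ⟨x, rfl⟩
  have hgap : 0 ≤ f 0 - m := sub_nonneg.2 (hm 0)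
  obtain ⟨η, hη, hηε⟩ : ∃ η > 0, 4 * η * (f 0 - m) ≤ ε ^ 2 := by
    refine ⟨ε ^ 2 / (4 * (f 0 - m + 1)), by positivity, ?_⟩
    rw [show 4 * (ε ^ 2 / (4 * (f 0 - m + 1))) * (f 0 - m) =
      ε ^ 2 * ((f 0 - m) / (f 0 - m + 1)) by field_simp]
    exact mul_le_of_le_one_right (by positivity) ((div_le_one (by positivity)).2 (by linarith))
  have hcont : Continuous f :=
    continuous_iff_continuousAt.2 fun x => (hf x).differentiableAt.continuousAt
  have hcoercive : Filter.Tendsto (fun x => f x + η * ‖x‖ ^ 2) (Filter.cocompact F) .atTop :=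
    Filter.tendsto_atTop_add_left_of_le _ m hm <|
      ((Filter.tendsto_pow_atTop two_ne_zero).comp
        (tendsto_norm_cocompact_atTop (E := F))).const_mul_atTop hη
  obtain ⟨x, hx⟩ := (hcont.add (by fun_prop)).exists_forall_le hcoercive
  have hcritical : f' x = -(2 * η) • x := by
    have hderiv := IsLocalMin.hasFDerivAt_eq_zero (.of_forall hx)
      ((hf x).hasFDerivAt.add ((hasStrictFDerivAt_norm_sq x).hasFDerivAt.const_mul η))
    refine ext_inner_right ℝ fun y => ?_
    have := congrArg (· y) hderiv
    simp only [_root_.add_apply, _root_.smul_apply, _root_.zero_apply, coe_innerSL_apply,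
      InnerProductSpace.toDual_apply_apply, nsmul_eq_mul, Nat.cast_ofNat, smul_eq_mul] at this
    rw [real_inner_smul_left]
    linarith
  have hnorm : η * ‖x‖ ^ 2 ≤ f 0 - m := by
    have : f x + η * ‖x‖ ^ 2 ≤ f 0 + η * ‖(0 : F)‖ ^ 2 := hx 0
    rw [norm_zero, zero_pow two_ne_zero, mul_zero, add_zero] at this
    linarith [hm x]
  refine ⟨x, le_of_sq_le_sq ?_ hε.le⟩
  calc ‖f' x‖ ^ 2 = 4 * η * (η * ‖x‖ ^ 2) := by
        rw [hcritical, norm_smul, Real.norm_eq_abs, mul_pow, sq_abs]; ring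
    _ ≤ 4 * η * (f 0 - m) := by gcongr
    _ ≤ ε ^ 2 := hηε

variable {R ι : Type*} [Fintype R] [Fintype ι]

/-- The logarithmic potential of the matrix scaling problem for `b` with row weights `w`. With
column scales `x c = exp (t c)`, its partial derivative in `t c` is the excess over one of the
weighted sum of column `c` after the rows of `b r c * x c` are normalized to sum one. -/
noncomputable def scalingPotential (b : R → ι → ℝ) (w : R → ℝ) (t : EuclideanSpace ℝ ι) : ℝ :=
  ∑ r, w r * Real.log (∑ c, b r c * Real.exp (t c)) - ∑ c, t c

variable {b : R → ι → ℝ} {w : R → ℝ}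

theorem hasGradientAt_scalingPotential (t : EuclideanSpace ℝ ι)
    (hpos : ∀ r, 0 < ∑ c, b r c * Real.exp (t c)) :
    HasGradientAt (scalingPotential b w)
      (WithLp.toLp 2 fun c =>
        ∑ r, w r * (b r c * Real.exp (t c) / ∑ c', b r c' * Real.exp (t c')) - 1) t := by
  rw [hasGradientAt_iff_hasFDerivAt]
  have hcoord (c : ι) : HasFDerivAt (fun s : EuclideanSpace ℝ ι => s c)
      (EuclideanSpace.proj c : EuclideanSpace ℝ ι →L[ℝ] ℝ) t :=
    (EuclideanSpace.proj c : EuclideanSpace ℝ ι →L[ℝ] ℝ).hasFDerivAt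
  have hlog (r : R) := ((HasFDerivAt.fun_sum (u := univ) fun c _ =>
    (hcoord c).exp.const_mul (b r c)).log (hpos r).ne').const_mul (w r)
  refine ((HasFDerivAt.fun_sum (u := univ) fun r _ => hlog r).sub
    (HasFDerivAt.fun_sum (u := univ) fun c _ => hcoord c)).congr_fderiv ?_
  ext v
  simp only [_root_.sub_apply, _root_.sum_apply, _root_.smul_apply, PiLp.proj_apply, smul_eq_mul,
    mul_sum, div_eq_mul_inv, InnerProductSpace.toDual_apply_apply, PiLp.inner_apply,
    RCLike.inner_apply, Real.ringHom_apply, mul_sub, mul_one, sum_sub_distrib, sub_left_inj]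
  rw [sum_comm]
  simp only [mul_comm, mul_left_comm, mul_assoc]

variable [DecidableEq ι] {π : R → ι}

theorem bddBelow_range_scalingPotential (hb : ∀ r c, 0 ≤ b r c) (hw : ∀ r, 0 ≤ w r)
    (hπ : ∀ r, 0 < b r (π r)) (hsum : ∀ c, ∑ r with π r = c, w r = 1) :
    BddBelow (Set.range (scalingPotential b w)) := by
  refine ⟨∑ r, w r * Real.log (b r (π r)), ?_⟩
  rintro _ ⟨t, rfl⟩
  have hlog (r : R) : Real.log (b r (π r)) + t (π r) ≤
      Real.log (∑ c, b r c * Real.exp (t c)) := by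
    rw [← Real.log_exp (t (π r)), ← Real.log_mul (hπ r).ne' (Real.exp_ne_zero _)]
    refine Real.log_le_log (mul_pos (hπ r) (Real.exp_pos _)) ?_
    exact single_le_sum (f := fun c => b r c * Real.exp (t c))
      (fun c _ => mul_nonneg (hb r c) (Real.exp_pos _).le) (mem_univ (π r))
  have hmarginal : ∑ r, w r * t (π r) = ∑ c, t c := by
    rw [← sum_fiberwise univ π]
    refine sum_congr rfl fun c _ => ?_
    rw [← one_mul (t c), ← hsum c, sum_mul]
    exact sum_congr rfl fun r hr => by rw [(mem_filter.1 hr).2]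
  rw [scalingPotential, le_sub_iff_add_le, ← hmarginal, ← sum_add_distrib]
  refine sum_le_sum fun r _ => ?_
  rw [← mul_add]
  exact mul_le_mul_of_nonneg_left (hlog r) (hw r)

theorem exists_pos_scaling_sum_sq_sub_one_le (hb : ∀ r c, 0 ≤ b r c) (hw : ∀ r, 0 ≤ w r)
    (hπ : ∀ r, 0 < b r (π r)) (hsum : ∀ c, ∑ r with π r = c, w r = 1) {η : ℝ} (hη : 0 < η) :
    ∃ x : ι → ℝ, (∀ c, 0 < x c) ∧
      ∑ c, (∑ r, w r * (b r c * x c / ∑ c', b r c' * x c') - 1) ^ 2 ≤ η := by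
  have hpos (t : EuclideanSpace ℝ ι) (r : R) : 0 < ∑ c, b r c * Real.exp (t c) :=
    sum_pos' (fun c _ => mul_nonneg (hb r c) (Real.exp_pos _).le)
      ⟨π r, mem_univ _, mul_pos (hπ r) (Real.exp_pos _)⟩
  obtain ⟨t, ht⟩ := exists_norm_gradient_le_of_bddBelow
    (fun t => hasGradientAt_scalingPotential (w := w) t (hpos t))
    (bddBelow_range_scalingPotential hb hw hπ hsum) (Real.sqrt_pos.2 hη)
  refine ⟨fun c => Real.exp (t c), fun c => Real.exp_pos _, ?_⟩
  simpa [EuclideanSpace.norm_eq, Real.sqrt_le_sqrt_iff hη.le] using ht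

end Scaling

section Gram

variable {𝕜 R ι : Type*} [RCLike 𝕜] [Fintype R]

theorem norm_sq_sum_smul_le {E : Type*} [SeminormedAddCommGroup E] [NormedSpace ℝ E] {w : R → ℝ}
    (hw : ∀ r, 0 ≤ w r) (z : R → E) [DecidablePred fun r => z r ≠ 0] :
    ‖∑ r, w r • z r‖ ^ 2 ≤ (∑ r with z r ≠ 0, w r) * ∑ r, w r * ‖z r‖ ^ 2 := by
  have hsum : ∑ r with z r ≠ 0, w r * ‖z r‖ = ∑ r, w r * ‖z r‖ := by
    refine sum_filter_of_ne fun r _ hr hz => hr ?_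
    rw [hz, norm_zero, mul_zero]
  calc ‖∑ r, w r • z r‖ ^ 2 ≤ (∑ r with z r ≠ 0, w r * ‖z r‖) ^ 2 := by
        rw [hsum]
        gcongr
        refine norm_sum_le_of_le _ fun r _ => ?_
        rw [norm_smul, Real.norm_of_nonneg (hw r)]
    _ ≤ (∑ r with z r ≠ 0, w r) * ∑ r with z r ≠ 0, w r * ‖z r‖ ^ 2 :=
      sum_sq_le_sum_mul_sum_of_sq_le_mul _ (fun r _ => hw r)
        (fun r _ => mul_nonneg (hw r) (sq_nonneg _)) fun r _ => by rw [mul_pow, sq, mul_assoc]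
    _ ≤ (∑ r with z r ≠ 0, w r) * ∑ r, w r * ‖z r‖ ^ 2 := by
      refine mul_le_mul_of_nonneg_left ?_ (sum_nonneg fun r _ => hw r)
      exact sum_le_sum_of_subset_of_nonneg (filter_subset _ _) fun r _ _ =>
        mul_nonneg (hw r) (sq_nonneg _)

/-- The Gram matrix of the columns of `b`, for the inner product that gives row `r` weight `w r`. -/
def weightedGram [DecidableEq R] (b : Matrix R ι 𝕜) (w : R → ℝ) : Matrix ι ι 𝕜 :=
  bᴴ * diagonal (fun r => (w r : 𝕜)) * b

theorem weightedGram_apply [DecidableEq R] (b : Matrix R ι 𝕜) (w : R → ℝ) (p q : ι) :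
    weightedGram b w p q = ∑ r, w r • (conj (b r p) * b r q) := by
  rw [weightedGram, mul_apply]
  refine sum_congr rfl fun r _ => ?_
  rw [mul_diagonal, conjTranspose_apply, RCLike.star_def, RCLike.real_smul_eq_coe_mul]
  ring

theorem weightedGram_apply_self [DecidableEq R] (b : Matrix R ι 𝕜) (w : R → ℝ) (p : ι) :
    weightedGram b w p p = ((∑ r, w r * ‖b r p‖ ^ 2 : ℝ) : 𝕜) := by
  simp [weightedGram_apply, RCLike.conj_mul, RCLike.real_smul_eq_coe_mul]

theorem weightedGram_mulVec_eq_zero [DecidableEq R] [Fintype ι] {b : Matrix R ι 𝕜} {x : ι → 𝕜}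
    (hx : b *ᵥ x = 0) (w : R → ℝ) : weightedGram b w *ᵥ x = 0 := by
  rw [weightedGram, ← mulVec_mulVec, hx, mulVec_zero]

theorem finrank_le_sum_norm_sq_of_mulVec_eq_self [Fintype ι] (G : Matrix ι ι 𝕜)
    (X : Submodule 𝕜 (ι → 𝕜)) (hX : ∀ x ∈ X, G *ᵥ x = x) :
    (finrank 𝕜 X : ℝ) ≤ ∑ p, ∑ q, ‖G p q‖ ^ 2 := by
  let e := (WithLp.linearEquiv 2 𝕜 (ι → 𝕜)).symm
  let Y : Submodule 𝕜 (EuclideanSpace 𝕜 ι) := X.map e.toLinearMap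
  let v := stdOrthonormalBasis 𝕜 Y
  have hv : Orthonormal 𝕜 fun i => (v i : EuclideanSpace 𝕜 ι) :=
    v.orthonormal.comp_linearIsometry Y.subtypeₗᵢ
  let row (p : ι) : EuclideanSpace 𝕜 ι := WithLp.toLp 2 fun q => conj (G p q)
  have hcoord (p : ι) (i) : inner 𝕜 (row p) (v i : EuclideanSpace 𝕜 ι) = (v i).1 p := by
    obtain ⟨x, hx, hxv⟩ := (v i).2
    rw [← hxv]
    calc inner 𝕜 (row p) (e x) = (G *ᵥ x) p := by
          simp [row, e, PiLp.inner_apply, mulVec, dotProduct, mul_comm]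
      _ = x p := by rw [hX x hx]
  have hrow (p : ι) : ‖row p‖ ^ 2 = ∑ q, ‖G p q‖ ^ 2 := by
    simp [EuclideanSpace.norm_sq_eq, row]
  calc (finrank 𝕜 X : ℝ) = ∑ i, ‖(v i : EuclideanSpace 𝕜 ι)‖ ^ 2 := by
        simp [hv.1, Y, LinearEquiv.finrank_map_eq]
    _ = ∑ p, ∑ i, ‖inner 𝕜 (v i : EuclideanSpace 𝕜 ι) (row p)‖ ^ 2 := by
        simp only [EuclideanSpace.norm_sq_eq, norm_inner_symm (v _).1, hcoord]
        exact sum_comm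
    _ ≤ ∑ p, ‖row p‖ ^ 2 := sum_le_sum fun p _ => hv.sum_inner_products_le (row p)
    _ = ∑ p, ∑ q, ‖G p q‖ ^ 2 := by simp only [hrow]

variable [DecidableEq 𝕜] {w : R → ℝ} {τ : ℝ}

theorem norm_sq_weightedGram_apply_le [DecidableEq R] (hw : ∀ r, 0 ≤ w r) (b : Matrix R ι 𝕜)
    (p q : ι) :
    ‖weightedGram b w p q‖ ^ 2 ≤ (∑ r with b r p ≠ 0 ∧ b r q ≠ 0, w r) *
      ∑ r, w r * (‖b r p‖ ^ 2 * ‖b r q‖ ^ 2) := by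
  rw [weightedGram_apply]
  refine (norm_sq_sum_smul_le hw _).trans_eq ?_
  simp only [norm_mul, RCLike.norm_conj, mul_pow, mul_ne_zero_iff, map_ne_zero]

theorem norm_sq_one_sub_weightedGram_apply_le [DecidableEq R] [DecidableEq ι]
    (hw : ∀ r, 0 ≤ w r) (hτ : 0 ≤ τ) (b : Matrix R ι 𝕜)
    (hoverlap : ∀ p q, p ≠ q → ∑ r with b r p ≠ 0 ∧ b r q ≠ 0, w r ≤ τ) (p q : ι) :
    ‖(1 - weightedGram b w) p q‖ ^ 2 ≤
      (if p = q then (∑ r, w r * ‖b r p‖ ^ 2 - 1) ^ 2 else 0) +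
        τ * ∑ r, w r * (‖b r p‖ ^ 2 * ‖b r q‖ ^ 2) := by
  have hnonneg : 0 ≤ ∑ r, w r * (‖b r p‖ ^ 2 * ‖b r q‖ ^ 2) :=
    sum_nonneg fun r _ => mul_nonneg (hw r) (by positivity)
  split_ifs with h
  · subst h
    rw [Matrix.sub_apply, one_apply_eq, weightedGram_apply_self, ← RCLike.ofReal_one,
      ← RCLike.ofReal_sub, RCLike.norm_ofReal, sq_abs, sub_sq_comm]
    exact le_add_of_nonneg_right (mul_nonneg hτ hnonneg)
  · rw [Matrix.sub_apply, one_apply_ne h, zero_sub, norm_neg, zero_add]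
    exact (norm_sq_weightedGram_apply_le hw b p q).trans <|
      mul_le_mul_of_nonneg_right (hoverlap p q h) hnonneg

theorem finrank_le_of_mulVec_eq_zero_of_row_norm_eq_one [Fintype ι] (hw : ∀ r, 0 ≤ w r) (hτ : 0 ≤ τ)
    (b : Matrix R ι 𝕜) (hrow : ∀ r, ∑ c, ‖b r c‖ ^ 2 = 1)
    (hoverlap : ∀ p q, p ≠ q → ∑ r with b r p ≠ 0 ∧ b r q ≠ 0, w r ≤ τ)
    (X : Submodule 𝕜 (ι → 𝕜)) (hX : ∀ x ∈ X, b *ᵥ x = 0) :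
    (finrank 𝕜 X : ℝ) ≤ ∑ p, (∑ r, w r * ‖b r p‖ ^ 2 - 1) ^ 2 + τ * ∑ r, w r := by
  classical
  have htotal : ∑ p, ∑ q, ∑ r, w r * (‖b r p‖ ^ 2 * ‖b r q‖ ^ 2) = ∑ r, w r := by
    simp only [sum_comm (s := univ (α := ι)) (t := univ (α := R)), ← mul_sum, hrow, mul_one]
  calc (finrank 𝕜 X : ℝ) ≤ ∑ p, ∑ q, ‖(1 - weightedGram b w) p q‖ ^ 2 := by
        refine finrank_le_sum_norm_sq_of_mulVec_eq_self _ X fun x hx => ?_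
        rw [sub_mulVec, one_mulVec, weightedGram_mulVec_eq_zero (hX x hx), sub_zero]
    _ ≤ ∑ p, ∑ q, _ := sum_le_sum fun p _ => sum_le_sum fun q _ =>
      norm_sq_one_sub_weightedGram_apply_le hw hτ b hoverlap p q
    _ = ∑ p, (∑ r, w r * ‖b r p‖ ^ 2 - 1) ^ 2 + τ * ∑ r, w r := by
      simp only [sum_add_distrib, sum_ite_eq, mem_univ, if_true, ← mul_sum, htotal]

end Gram

section DesignMatrix

variable {𝕜 R ι E : Type*} [RCLike 𝕜] [Fintype ι]

/-- The matrix `A` with column `c` multiplied by `√(x c)`, and then each row divided by its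
Euclidean norm. A zero row stays zero. -/
noncomputable def rescaled (A : Matrix R ι 𝕜) (x : ι → ℝ) : Matrix R ι 𝕜 := fun r c =>
  ((√(∑ c', ‖A r c'‖ ^ 2 * x c') : ℝ) : 𝕜)⁻¹ * (A r c * ((√(x c) : ℝ) : 𝕜))

variable {A : Matrix R ι 𝕜} {x : ι → ℝ}

theorem norm_sq_rescaled_apply (hx : ∀ c, 0 < x c) (r : R) (c : ι) :
    ‖rescaled A x r c‖ ^ 2 = ‖A r c‖ ^ 2 * x c / ∑ c', ‖A r c'‖ ^ 2 * x c' := by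
  have hrow : 0 ≤ ∑ c', ‖A r c'‖ ^ 2 * x c' :=
    sum_nonneg fun c' _ => mul_nonneg (sq_nonneg _) (hx c').le
  simp only [rescaled, norm_mul, norm_inv, RCLike.norm_ofReal, mul_pow, inv_pow, sq_abs,
    Real.sq_sqrt (hx c).le, Real.sq_sqrt hrow]
  rw [div_eq_inv_mul]

theorem apply_ne_zero_of_rescaled_apply_ne_zero {r : R} {c : ι} (h : rescaled A x r c ≠ 0) :
    A r c ≠ 0 :=
  left_ne_zero_of_mul (right_ne_zero_of_mul h)

theorem rescaled_mulVec_eq_zero (hx : ∀ c, 0 < x c) {y : ι → 𝕜} (hy : A *ᵥ y = 0) :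
    (rescaled A x *ᵥ fun c => ((√(x c) : ℝ) : 𝕜)⁻¹ * y c) = 0 := by
  ext r
  calc (rescaled A x *ᵥ fun c => ((√(x c) : ℝ) : 𝕜)⁻¹ * y c) r
      = ((√(∑ c', ‖A r c'‖ ^ 2 * x c') : ℝ) : 𝕜)⁻¹ * (A *ᵥ y) r := by
        simp only [mulVec, dotProduct, mul_sum]
        refine sum_congr rfl fun c _ => ?_
        have hsqrt : ((√(x c) : ℝ) : 𝕜) ≠ 0 :=
          RCLike.ofReal_ne_zero.2 (Real.sqrt_ne_zero'.2 (hx c))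
        rw [rescaled, mul_assoc, mul_assoc, mul_inv_cancel_left₀ hsqrt]
    _ = 0 := by rw [hy, Pi.zero_apply, mul_zero]

variable [Fintype R] [DecidableEq 𝕜] {w : R → ℝ} {τ : ℝ}

theorem finrank_le_sum_sq_add_of_mulVec_eq_zero (hx : ∀ c, 0 < x c) (hA : ∀ r, ∃ c, A r c ≠ 0)
    (hw : ∀ r, 0 ≤ w r) (hτ : 0 ≤ τ)
    (hoverlap : ∀ p q, p ≠ q → ∑ r with A r p ≠ 0 ∧ A r q ≠ 0, w r ≤ τ)
    (X : Submodule 𝕜 (ι → 𝕜)) (hX : ∀ y ∈ X, A *ᵥ y = 0) :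
    (finrank 𝕜 X : ℝ) ≤
      ∑ p, (∑ r, w r * (‖A r p‖ ^ 2 * x p / ∑ c, ‖A r c‖ ^ 2 * x c) - 1) ^ 2 +
        τ * ∑ r, w r := by
  have hrow (r : R) : ∑ c, ‖rescaled A x r c‖ ^ 2 = 1 := by
    obtain ⟨c, hc⟩ := hA r
    have hpos : 0 < ∑ c', ‖A r c'‖ ^ 2 * x c' :=
      sum_pos' (fun c' _ => mul_nonneg (sq_nonneg _) (hx c').le)
        ⟨c, mem_univ c, mul_pos (pow_pos (norm_pos_iff.2 hc) 2) (hx c)⟩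
    simp only [norm_sq_rescaled_apply hx, ← sum_div, div_self hpos.ne']
  have hoverlap' (p q : ι) (hpq : p ≠ q) :
      ∑ r with rescaled A x r p ≠ 0 ∧ rescaled A x r q ≠ 0, w r ≤ τ := by
    refine (sum_le_sum_of_subset_of_nonneg ?_ fun r _ _ => hw r).trans (hoverlap p q hpq)
    exact monotone_filter_right _ fun r _ h =>
      h.imp apply_ne_zero_of_rescaled_apply_ne_zero apply_ne_zero_of_rescaled_apply_ne_zero
  have hsqrt (c : ι) : ((√(x c) : ℝ) : 𝕜)⁻¹ ≠ 0 :=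
    inv_ne_zero (RCLike.ofReal_ne_zero.2 (Real.sqrt_ne_zero'.2 (hx c)))
  let e : (ι → 𝕜) ≃ₗ[𝕜] (ι → 𝕜) :=
    LinearEquiv.piCongrRight fun c => LinearEquiv.smulOfNeZero 𝕜 𝕜 _ (hsqrt c)
  have hbound := finrank_le_of_mulVec_eq_zero_of_row_norm_eq_one hw hτ (rescaled A x) hrow
    hoverlap' (X.map e.toLinearMap) (by
      rintro _ ⟨y, hy, rfl⟩
      exact rescaled_mulVec_eq_zero hx (hX y hy))
  simpa only [LinearEquiv.finrank_map_eq, norm_sq_rescaled_apply hx] using hbound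

variable [DecidableEq ι] {π : R → ι}

theorem finrank_le_mul_card_of_mulVec_eq_zero (hw : ∀ r, 0 ≤ w r) (hτ : 0 ≤ τ)
    (hπ : ∀ r, A r (π r) ≠ 0) (hsum : ∀ c, ∑ r with π r = c, w r = 1)
    (hoverlap : ∀ p q, p ≠ q → ∑ r with A r p ≠ 0 ∧ A r q ≠ 0, w r ≤ τ)
    (X : Submodule 𝕜 (ι → 𝕜)) (hX : ∀ y ∈ X, A *ᵥ y = 0) :
    (finrank 𝕜 X : ℝ) ≤ τ * Fintype.card ι := by
  have hcard : ∑ r, w r = Fintype.card ι := by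
    simp only [← sum_fiberwise univ π w, hsum, sum_const, card_univ, nsmul_one]
  refine le_of_forall_pos_le_add fun η hη => ?_
  obtain ⟨x, hx, hxη⟩ := exists_pos_scaling_sum_sq_sub_one_le (b := fun r c => ‖A r c‖ ^ 2)
    (fun r c => sq_nonneg _) hw (fun r => pow_pos (norm_pos_iff.2 (hπ r)) 2) hsum hη
  have hbound :=
    finrank_le_sum_sq_add_of_mulVec_eq_zero hx (fun r => ⟨π r, hπ r⟩) hw hτ hoverlap X hX
  rw [hcard] at hbound
  linarith

variable [AddCommGroup E] [Module 𝕜 E]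

theorem finrank_span_range_le_mul_card (hw : ∀ r, 0 ≤ w r) (hτ : 0 ≤ τ)
    (hπ : ∀ r, A r (π r) ≠ 0) (hsum : ∀ c, ∑ r with π r = c, w r = 1)
    (hoverlap : ∀ p q, p ≠ q → ∑ r with A r p ≠ 0 ∧ A r q ≠ 0, w r ≤ τ)
    {u : ι → E} (hu : ∀ r, ∑ c, A r c • u c = 0) :
    (finrank 𝕜 (span 𝕜 (Set.range u)) : ℝ) ≤ τ * Fintype.card ι := by
  let U := Fintype.linearCombination 𝕜 u
  let e := (Module.piEquiv ι 𝕜 𝕜).symm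
  have hker : ∀ y ∈ (LinearMap.range U.dualMap).map e.toLinearMap, A *ᵥ y = 0 := by
    rintro _ ⟨_, ⟨f, rfl⟩, rfl⟩
    ext r
    simpa [mulVec, dotProduct, e, U, Module.piEquiv, Fintype.linearCombination_apply] using
      congrArg f (hu r)
  have hbound := finrank_le_mul_card_of_mulVec_eq_zero hw hτ hπ hsum hoverlap _ hker
  rwa [LinearEquiv.finrank_map_eq, LinearMap.finrank_range_dualMap_eq_finrank_range,
    Fintype.range_linearCombination] at hbound

end DesignMatrix

section Blocks

theorem exists_sum_smul_eq_zero_of_mem_span_image_erase {K ι E : Type*} [Ring K] [Nontrivial K]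
    [AddCommGroup E] [Module K E] [Fintype ι] [DecidableEq ι] {u : ι → E} {s : Finset ι} {i : ι}
    (hi : u i ∈ span K (u '' (s.erase i))) :
    ∃ a : ι → K, a i ≠ 0 ∧ (∀ j, a j ≠ 0 → j ∈ insert i s) ∧ ∑ j, a j • u j = 0 := by
  obtain ⟨c, hc⟩ := (mem_span_image_finset_iff_exists_fun' K).1 hi
  refine ⟨Pi.single i 1 - fun j => if j ∈ s.erase i then c j else 0, by simp, fun j hj => ?_, ?_⟩
  · contrapose! hj
    simp_all
  · simp only [Pi.sub_apply, sub_smul, sum_sub_distrib, ite_smul, zero_smul, sum_ite_mem,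
      univ_inter, hc]
    simp [Pi.single_apply]

theorem span_range_filter_ne_zero {K ι E : Type*} [Semiring K] [AddCommMonoid E] [Module K E]
    (u : ι → E) [DecidablePred fun i => u i ≠ 0] (T : Finset ι) :
    span K (Set.range fun i : ({i ∈ T | u i ≠ 0} : Finset ι) => u i) = span K (u '' T) := by
  rw [← span_sdiff_singleton_zero (s := u '' T)]
  congr 1
  ext y
  simp only [Set.mem_range, Set.mem_sdiff, Set.mem_image, Set.mem_singleton_iff, Subtype.exists,
    mem_filter, mem_coe]
  grind

variable {𝕜 ι E : Type*} [RCLike 𝕜] [DecidableEq ι] [AddCommGroup E] [Module 𝕜 E]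
  {u : ι → E} {k : ℕ} {κ d : ℝ}

theorem finrank_span_range_le_of_blocks {β : Type*} [Fintype ι] [Fintype β]
    {B : β → Finset ι} {g : β → ℝ}
    (hspan : ∀ b, ∀ i ∈ B b, u i ∈ span 𝕜 (u '' ((B b).erase i)))
    (hcard : ∀ b, #(B b) ≤ k) (hg : ∀ b, 0 ≤ g b) (hκ : 0 ≤ κ) (hd : 0 < d)
    (hpair : ∀ i j, i ≠ j → ∑ b with i ∈ B b ∧ j ∈ B b, g b ≤ κ)
    (hdeg : ∀ i, d ≤ ∑ b with i ∈ B b, g b) :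
    (finrank 𝕜 (span 𝕜 (Set.range u)) : ℝ) ≤ k * κ / d * Fintype.card ι := by
  classical
  let deg (i : ι) : ℝ := ∑ b with i ∈ B b, g b
  have hdeg_pos (i : ι) : 0 < deg i := hd.trans_le (hdeg i)
  choose a hai hasupp hau using fun r : Σ b, B b =>
    exists_sum_smul_eq_zero_of_mem_span_image_erase (hspan r.1 r.2 r.2.2)
  have hsupp (r : Σ b, B b) (j : ι) (hj : a r j ≠ 0) : j ∈ B r.1 := by
    simpa only [insert_eq_of_mem r.2.2] using hasupp r j hj
  let w (r : Σ b, B b) : ℝ := g r.1 / deg r.2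
  have hw (r) : 0 ≤ w r := div_nonneg (hg _) (hdeg_pos _).le
  refine finrank_span_range_le_mul_card (A := a) (π := fun r : Σ b, B b => (r.2 : ι)) hw
    (by positivity) hai (fun c => ?_) (fun p q hpq => ?_) hau
  · calc ∑ r : (Σ b, B b) with (r.2 : ι) = c, w r
        = ∑ b, ∑ i ∈ B b, if i = c then g b / deg i else 0 := by
          rw [sum_filter, Fintype.sum_sigma]
          exact sum_congr rfl fun b _ =>
            sum_coe_sort (B b) fun i => if i = c then g b / deg i else 0
      _ = ∑ b with c ∈ B b, g b / deg c := by simp only [sum_ite_eq', sum_filter]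
      _ = 1 := by rw [← sum_div]; exact div_self (hdeg_pos c).ne'
  · calc ∑ r with a r p ≠ 0 ∧ a r q ≠ 0, w r
        ≤ ∑ r : (Σ b, B b) with p ∈ B r.1 ∧ q ∈ B r.1, g r.1 / d := by
          refine (sum_le_sum fun r _ => ?_).trans (sum_le_sum_of_subset_of_nonneg (fun r => ?_) ?_)
          · exact div_le_div_of_nonneg_left (hg _) hd (hdeg _)
          · simpa using fun hp hq => ⟨hsupp r p hp, hsupp r q hq⟩
          · exact fun r _ _ => div_nonneg (hg _) hd.le
      _ = ∑ b with p ∈ B b ∧ q ∈ B b, #(B b) * (g b / d) := by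
          rw [sum_filter, Fintype.sum_sigma, sum_filter]
          simp
      _ ≤ ∑ b with p ∈ B b ∧ q ∈ B b, k * (g b / d) := by
          refine sum_le_sum fun b _ => mul_le_mul_of_nonneg_right ?_ (div_nonneg (hg b) hd.le)
          exact_mod_cast hcard b
      _ ≤ k * κ / d := by
          rw [← mul_sum, ← sum_div, mul_div_assoc]
          gcongr
          exact hpair p q hpq

theorem finrank_span_image_le_of_blocks {T : Finset ι} {𝓑 : Finset (Finset ι)}
    {g : Finset ι → ℝ}
    (hsub : ∀ s ∈ 𝓑, s ⊆ T) (hcard : ∀ s ∈ 𝓑, #s ≤ k)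
    (hspan : ∀ s ∈ 𝓑, ∀ i ∈ s, u i ∈ span 𝕜 (u '' (s.erase i)))
    (hg : ∀ s ∈ 𝓑, 0 ≤ g s) (hκ : 0 ≤ κ) (hd : 0 < d)
    (hpair : ∀ i ∈ T, ∀ j ∈ T, i ≠ j → ∑ s ∈ 𝓑 with i ∈ s ∧ j ∈ s, g s ≤ κ)
    (hdeg : ∀ i ∈ T, u i ≠ 0 → d ≤ ∑ s ∈ 𝓑 with i ∈ s, g s) :
    (finrank 𝕜 (span 𝕜 (u '' T)) : ℝ) ≤ k * κ / d * #T := by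
  classical
  let T₀ : Finset ι := {i ∈ T | u i ≠ 0}
  have hsum (P : Finset ι → Prop) [DecidablePred P] :
      ∑ s : 𝓑 with P s.1, g s.1 = ∑ s ∈ 𝓑 with P s, g s := by
    rw [sum_filter, sum_filter]
    exact sum_coe_sort 𝓑 fun s => if P s then g s else 0
  have hbound : (finrank 𝕜 (span 𝕜 (Set.range fun i : T₀ => u i)) : ℝ) ≤
      k * κ / d * Fintype.card T₀ := by
    refine finrank_span_range_le_of_blocks (β := 𝓑) (B := fun s => s.1.subtype (· ∈ T₀))
      (g := fun s => g s.1) ?_ (fun s => ?_) (fun s => hg _ s.2) hκ hd (fun i j hij => ?_)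
      fun i => ?_
    · intro s i hi
      have := hspan s s.2 i (mem_subtype.1 hi)
      rw [← span_sdiff_singleton_zero] at this
      refine span_mono ?_ this
      rintro _ ⟨⟨j, hj, rfl⟩, hj0⟩
      obtain ⟨hji, hjs⟩ := mem_erase.1 hj
      exact ⟨⟨j, mem_filter.2 ⟨hsub s s.2 hjs, hj0⟩⟩, by
        simpa only [coe_erase, Set.mem_sdiff, mem_coe, mem_subtype, Set.mem_singleton_iff,
          Subtype.ext_iff] using ⟨hjs, hji⟩, rfl⟩
    · rw [card_subtype]
      exact (card_filter_le _ _).trans (hcard s s.2)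
    · simp only [mem_subtype, hsum fun s => i.1 ∈ s ∧ j.1 ∈ s]
      exact hpair i (mem_filter.1 i.2).1 j (mem_filter.1 j.2).1 (Subtype.coe_ne_coe.2 hij)
    · simp only [mem_subtype, hsum fun s => i.1 ∈ s]
      exact hdeg i (mem_filter.1 i.2).1 (mem_filter.1 i.2).2
  rw [← span_range_filter_ne_zero]
  refine hbound.trans ?_
  rw [Fintype.card_coe]
  gcongr
  exact filter_subset _ _

end Blocks

section CollinearTriples

variable {K V : Type*} [DivisionRing K] [AddCommGroup V] [Module K V]

theorem notMem_span_singleton_of_linearIndependent_pair {x y : V}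
    (h : LinearIndependent K ![x, y]) : x ∉ span K {y} := fun hx =>
  have ⟨c, hc⟩ := mem_span_singleton.1 hx
  (linearIndependent_fin2.1 h).2 c hc

theorem mem_span_pair_exchange {a b c : V} (hc : c ∈ span K {a, b})
    (hcb : LinearIndependent K ![c, b]) : a ∈ span K {c, b} :=
  mem_span_insert_exchange hc (notMem_span_singleton_of_linearIndependent_pair hcb)

open scoped Classical in
/-- The points of `T` lying in the span of `s`; for `s` a pair, the points of `T` on a line of the
projective space of `V`. -/
noncomputable def pointsInSpan (K : Type*) [DivisionRing K] [Module K V] (T : Finset V)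
    (s : Set V) : Finset V :=
  {x ∈ T | x ∈ span K s}

open scoped Classical in
/-- The triples of distinct points of `T`, each in the span of the other two. -/
noncomputable def collinearTriples (K : Type*) [DivisionRing K] [Module K V] (T : Finset V) :
    Finset (Finset V) :=
  {s ∈ T.powersetCard 3 | ∀ p ∈ s, p ∈ span K (s.erase p : Set V)}

/-- The weight `1 / (ℓ - 2)` of a triple on a line with `ℓ` points of `T`, chosen so that the
`ℓ - 2` triples of that line through two given points have total weight one. -/
noncomputable def tripleWeight (K : Type*) [DivisionRing K] [Module K V] (T s : Finset V) : ℝ :=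
  ((#(pointsInSpan K T s) - 2 : ℕ) : ℝ)⁻¹

variable {T : Finset V} {a b c p : V}

theorem mem_pointsInSpan {s : Set V} {x : V} : x ∈ pointsInSpan K T s ↔ x ∈ T ∧ x ∈ span K s := by
  simp only [pointsInSpan, mem_filter]

theorem tripleWeight_nonneg (s : Finset V) : 0 ≤ tripleWeight K T s :=
  inv_nonneg.2 (Nat.cast_nonneg _)

variable [DecidableEq V]

theorem mem_collinearTriples {s : Finset V} : s ∈ collinearTriples K T ↔
    (s ⊆ T ∧ #s = 3) ∧ ∀ p ∈ s, p ∈ span K (s.erase p : Set V) := by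
  simp only [collinearTriples, mem_filter, mem_powersetCard]
  convert Iff.rfl

theorem insert_pair_mem_collinearTriples_iff
    (hT : (T : Set V).Pairwise fun x y => LinearIndependent K ![x, y])
    (ha : a ∈ T) (hb : b ∈ T) (hab : a ≠ b) (hca : c ≠ a) (hcb : c ≠ b) :
    {c, a, b} ∈ collinearTriples K T ↔ c ∈ pointsInSpan K T {a, b} := by
  have herase : ({c, a, b} : Finset V).erase c = {a, b} := by grind
  rw [mem_collinearTriples, mem_pointsInSpan]
  constructor
  · rintro ⟨⟨hsub, -⟩, hspan⟩
    refine ⟨hsub (mem_insert_self _ _), ?_⟩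
    simpa [herase] using hspan c (mem_insert_self _ _)
  · rintro ⟨hc, hspan⟩
    refine ⟨⟨by grind, by grind⟩, ?_⟩
    have herase_left : ({c, a, b} : Finset V).erase a = {c, b} := by grind
    have herase_right : ({c, a, b} : Finset V).erase b = {c, a} := by grind
    simp only [forall_mem_insert, mem_singleton, forall_eq, herase, herase_left, herase_right,
      coe_pair]
    exact ⟨hspan, mem_span_pair_exchange hspan (hT hc hb hcb),
      mem_span_pair_exchange (by rwa [Set.pair_comm]) (hT hc ha hca)⟩

theorem pointsInSpan_eq_of_mem_pointsInSpan (hc : c ∈ pointsInSpan K T {a, b}) :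
    pointsInSpan K T ({c, a, b} : Finset V) = pointsInSpan K T {a, b} := by
  ext x
  rw [mem_pointsInSpan, mem_pointsInSpan, coe_insert, coe_pair,
    span_insert_eq_span (mem_pointsInSpan.1 hc).2]

theorem filter_mem_collinearTriples_eq_image
    (hT : (T : Set V).Pairwise fun x y => LinearIndependent K ![x, y])
    (ha : a ∈ T) (hb : b ∈ T) (hab : a ≠ b) :
    {s ∈ collinearTriples K T | a ∈ s ∧ b ∈ s} =
      (pointsInSpan K T {a, b} \ {a, b}).image fun c => {c, a, b} := by
  ext s
  simp only [mem_filter, mem_image, mem_sdiff, mem_insert, mem_singleton, not_or]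
  constructor
  · rintro ⟨hs, has, hbs⟩
    obtain ⟨c, hc, rfl⟩ : ∃ c, (c ≠ a ∧ c ≠ b) ∧ {c, a, b} = s := by
      have hsub : {a, b} ⊆ s := insert_subset has (singleton_subset_iff.2 hbs)
      obtain ⟨c, hc⟩ : ∃ c, s \ {a, b} = {c} := card_eq_one.1 <| by
        rw [card_sdiff_of_subset hsub, (mem_collinearTriples.1 hs).1.2, card_pair hab]
      refine ⟨c, ?_, by rw [insert_eq, ← hc, sdiff_union_of_subset hsub]⟩
      have hcs : c ∈ s \ {a, b} := hc ▸ mem_singleton_self c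
      simpa only [mem_insert, mem_singleton, not_or] using (mem_sdiff.1 hcs).2
    exact ⟨c, ⟨(insert_pair_mem_collinearTriples_iff hT ha hb hab hc.1 hc.2).1 hs, hc⟩, rfl⟩
  · rintro ⟨c, ⟨hc, hca, hcb⟩, rfl⟩
    exact ⟨(insert_pair_mem_collinearTriples_iff hT ha hb hab hca hcb).2 hc, by simp, by simp⟩

theorem sum_tripleWeight_of_pair
    (hT : (T : Set V).Pairwise fun x y => LinearIndependent K ![x, y])
    (ha : a ∈ T) (hb : b ∈ T) (hab : a ≠ b) :
    ∑ s ∈ collinearTriples K T with a ∈ s ∧ b ∈ s, tripleWeight K T s =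
      if (pointsInSpan K T {a, b} \ {a, b}).Nonempty then 1 else 0 := by
  have hsub : {a, b} ⊆ pointsInSpan K T {a, b} := by
    simp only [insert_subset_iff, singleton_subset_iff, mem_pointsInSpan]
    exact ⟨⟨ha, mem_span_of_mem (by simp)⟩, hb, mem_span_of_mem (by simp)⟩
  have hcard : #(pointsInSpan K T {a, b} \ {a, b}) = #(pointsInSpan K T {a, b}) - 2 := by
    rw [card_sdiff_of_subset hsub, card_pair hab]
  have hinj : Set.InjOn (fun c : V => ({c, a, b} : Finset V))
      (pointsInSpan K T {a, b} \ {a, b} : Finset V) := by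
    intro c hc d _ h
    have hcd : c ∈ ({d, a, b} : Finset V) := by simpa using Finset.ext_iff.1 h c
    grind
  rw [filter_mem_collinearTriples_eq_image hT ha hb hab, sum_image hinj,
    sum_congr rfl fun c hc => by
      rw [tripleWeight, pointsInSpan_eq_of_mem_pointsInSpan (mem_sdiff.1 hc).1, ← hcard],
    sum_const, nsmul_eq_mul]
  split_ifs with h
  · exact mul_inv_cancel₀ (Nat.cast_ne_zero.2 h.card_pos.ne')
  · rw [not_nonempty_iff_eq_empty.1 h, card_empty, Nat.cast_zero, zero_mul]

theorem two_mul_sum_tripleWeight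
    (hT : (T : Set V).Pairwise fun x y => LinearIndependent K ![x, y]) (hp : p ∈ T) :
    2 * ∑ s ∈ collinearTriples K T with p ∈ s, tripleWeight K T s =
      #{q ∈ T.erase p | (pointsInSpan K T {p, q} \ {p, q}).Nonempty} := by
  calc 2 * ∑ s ∈ collinearTriples K T with p ∈ s, tripleWeight K T s
      = ∑ s ∈ collinearTriples K T with p ∈ s, ∑ _q ∈ s.erase p, tripleWeight K T s := by
        rw [mul_sum]
        refine sum_congr rfl fun s hs => ?_
        obtain ⟨hs, hps⟩ := mem_filter.1 hs
        rw [sum_const, card_erase_of_mem hps, (mem_collinearTriples.1 hs).1.2, nsmul_eq_mul]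
        norm_num
    _ = ∑ q ∈ T.erase p, ∑ s ∈ collinearTriples K T with p ∈ s ∧ q ∈ s, tripleWeight K T s := by
        refine sum_comm' fun s q => ?_
        simp only [mem_filter, mem_erase, mem_collinearTriples]
        grind
    _ = ∑ q ∈ T.erase p, if (pointsInSpan K T {p, q} \ {p, q}).Nonempty then 1 else 0 :=
        sum_congr rfl fun q hq => sum_tripleWeight_of_pair hT hp (mem_of_mem_erase hq)
          (ne_of_mem_erase hq).symm
    _ = #{q ∈ T.erase p | (pointsInSpan K T {p, q} \ {p, q}).Nonempty} := sum_boole _ _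

theorem ncard_le_two_mul_sum_tripleWeight
    (hT : (T : Set V).Pairwise fun x y => LinearIndependent K ![x, y]) (hp : p ∈ T) :
    ({q ∈ (T : Set V) | ∃ t ∈ T, t ≠ p ∧ t ≠ q ∧ t ∈ span K {p, q}}.ncard : ℝ) ≤
      2 * ∑ s ∈ collinearTriples K T with p ∈ s, tripleWeight K T s := by
  rw [two_mul_sum_tripleWeight hT hp, Nat.cast_le, ← Set.ncard_coe_finset]
  refine Set.ncard_le_ncard ?_ (finite_toSet _)
  rintro q ⟨hq, t, ht, htp, htq, htspan⟩
  have hqp : q ≠ p := by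
    rintro rfl
    exact notMem_span_singleton_of_linearIndependent_pair (hT ht hq htq)
      (by rwa [Set.pair_eq_singleton] at htspan)
  refine mem_filter.2 ⟨mem_erase.2 ⟨hqp, hq⟩, t, ?_⟩
  simp [mem_pointsInSpan, ht, htp, htq, htspan]

end CollinearTriples

section Quotient

theorem finrank_le_finrank_add_finrank_map_mkQ {K V : Type*} [DivisionRing K] [AddCommGroup V]
    [Module K V] (W U : Submodule K V) [FiniteDimensional K W] [FiniteDimensional K U] :
    finrank K U ≤ finrank K W + finrank K (U.map W.mkQ) := by
  have hker : finrank K (LinearMap.ker (W.mkQ ∘ₗ U.subtype)) ≤ finrank K W := by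
    rw [LinearMap.ker_comp, ker_mkQ, ← finrank_map_subtype_eq, map_comap_subtype]
    exact finrank_mono inf_le_right
  have hrank := (W.mkQ ∘ₗ U.subtype).finrank_range_add_finrank_ker
  rw [LinearMap.range_comp, range_subtype] at hrank
  lia

variable {𝕜 V : Type*} [RCLike 𝕜] [AddCommGroup V] [Module 𝕜 V] {T : Finset V}
  {W : Submodule 𝕜 V}

theorem finrank_map_mkQ_span_le [DecidableEq V] {d : ℝ} (hd : 0 < d)
    (hT : (T : Set V).Pairwise fun x y => LinearIndependent 𝕜 ![x, y])
    (hdeg : ∀ p ∈ T, p ∉ W → d ≤ ∑ s ∈ collinearTriples 𝕜 T with p ∈ s, tripleWeight 𝕜 T s) :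
    (finrank 𝕜 ((span 𝕜 (T : Set V)).map W.mkQ) : ℝ) ≤ 3 / d * #T := by
  have hspan (s) (hs : s ∈ collinearTriples 𝕜 T) (p) (hp : p ∈ s) :
      W.mkQ p ∈ span 𝕜 (W.mkQ '' (s.erase p)) := by
    rw [← map_span]
    exact mem_map_of_mem ((mem_collinearTriples.1 hs).2 p hp)
  have hpair (p) (hp : p ∈ T) (q) (hq : q ∈ T) (hpq : p ≠ q) :
      ∑ s ∈ collinearTriples 𝕜 T with p ∈ s ∧ q ∈ s, tripleWeight 𝕜 T s ≤ 1 := by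
    rw [sum_tripleWeight_of_pair hT hp hq hpq]
    split_ifs <;> norm_num
  have hdeg' (p) (hp : p ∈ T) (hpW : W.mkQ p ≠ 0) :=
    hdeg p hp (mt (Quotient.mk_eq_zero W).2 hpW)
  rw [map_span]
  exact_mod_cast finrank_span_image_le_of_blocks (fun s hs => (mem_collinearTriples.1 hs).1.1)
    (fun s hs => (mem_collinearTriples.1 hs).1.2.le) hspan (fun s _ => tripleWeight_nonneg s)
    zero_le_one hd hpair hdeg'

theorem stmt_14_general [FiniteDimensional 𝕜 W] {δ : ℝ}
    (hδ : 0 < δ) (hT : (T : Set V).Pairwise fun x y => LinearIndependent 𝕜 ![x, y])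
    (hthird : ∀ p ∈ T, p ∉ W → δ * #T ≤
      ({q ∈ (T : Set V) | ∃ t ∈ T, t ≠ p ∧ t ≠ q ∧ t ∈ span 𝕜 {p, q}}.ncard : ℝ)) :
    (finrank 𝕜 (span 𝕜 (T : Set V)) : ℝ) ≤ finrank 𝕜 W + 6 / δ := by
  classical
  rcases T.eq_empty_or_nonempty with rfl | hne
  · rw [coe_empty, span_empty, finrank_bot, Nat.cast_zero]
    positivity
  have : 0 < (#T : ℝ) := Nat.cast_pos.2 hne.card_pos
  have hquot : (finrank 𝕜 ((span 𝕜 (T : Set V)).map W.mkQ) : ℝ) ≤ 3 / (δ * #T / 2) * #T :=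
    finrank_map_mkQ_span_le (by positivity) hT fun p hp hpW => by
      linarith [hthird p hp hpW, ncard_le_two_mul_sum_tripleWeight hT hp]
  calc (finrank 𝕜 (span 𝕜 (T : Set V)) : ℝ)
      ≤ finrank 𝕜 W + finrank 𝕜 ((span 𝕜 (T : Set V)).map W.mkQ) :=
        mod_cast finrank_le_finrank_add_finrank_map_mkQ W _
    _ ≤ finrank 𝕜 W + 3 / (δ * #T / 2) * #T := by gcongr
    _ = finrank 𝕜 W + 6 / δ := by field_simp; norm_num

end Quotient

/-- robust SG modulo a subspace: there is a universal constant `C` such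
that for any `r`-dimensional `W ⊆ ℂⁿ`, finite sets `𝒲 ⊂ W` and `𝒦 ⊂ ℂⁿ \ W` with
`𝒯 = 𝒦 ∪ 𝒲` pairwise linearly independent, if every `p ∈ 𝒦` spans together with a
`δ`-fraction of `q ∈ 𝒯` a third point of `𝒯`, then `dim span 𝒯 ≤ C (r + 1/δ)`. -/
theorem stmt_14 :
    ∃ C : ℝ, 0 < C ∧ ∀ (n r : ℕ) (δ : ℝ), 0 < δ → δ ≤ 1 →
      ∀ (W : Submodule ℂ (Fin n → ℂ)), Module.finrank ℂ W = r →
      ∀ (𝒲 𝒦 𝒯 : Finset (Fin n → ℂ)),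
        (∀ w ∈ 𝒲, w ∈ W) →
        (∀ p ∈ 𝒦, p ∉ W) →
        𝒯 = 𝒦 ∪ 𝒲 →
        (∀ x ∈ 𝒯, ∀ y ∈ 𝒯, x ≠ y → LinearIndependent ℂ ![x, y]) →
        (∀ p ∈ 𝒦, δ * 𝒯.card ≤
          ({q ∈ (𝒯 : Set (Fin n → ℂ)) | ∃ t ∈ 𝒯, t ≠ p ∧ t ≠ q ∧
            t ∈ Submodule.span ℂ ({p, q} : Set (Fin n → ℂ))}.ncard : ℝ)) →
        (Module.finrank ℂ ↥(Submodule.span ℂ ((𝒯 : Set (Fin n → ℂ)))) : ℝ) ≤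
          C * (r + 1 / δ) := by
  refine ⟨6, by norm_num, fun n r δ hδ _ W hW 𝒲 𝒦 𝒯 h𝒲 _ h𝒯 hindep hthird => ?_⟩
  have hbound := stmt_14_general hδ (fun x hx y hy => hindep x hx y hy) fun p hp hpW =>
    hthird p ((mem_union.1 (h𝒯 ▸ hp)).resolve_right (mt (h𝒲 p) hpW))
  rw [hW] at hbound
  exact hbound.trans (by rw [mul_add, mul_one_div]; linarith [Nat.cast_nonneg (α := ℝ) r])
end
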